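/- For the cycle graph P_n with n ≥ 2 edges: H^0(P_n) ≅ ℤ{n} ⊕ ℤ{n−1} if n is even and ℤ{n} if n is odd; and for i > 0, H^i(P_n) ≅ ℤ₂{n−i} ⊕ ℤ{n−i−1} if n−i ≥ 2 is even, ℤ{n−i} if n−i ≥ 2 is odd, and 0 if n−i ≤ 1. In particular H^*(P_n) contains 2-torsion for all n ≥ 3. -/

import Mathlib

/-- A finite multigraph (possibly with loops and multiple edges), with
vertex type `V` and edges indexed by `Fin n`, edge `e` having endpoints `ends e`. -/
structure OGraph where
  V : Type
  [finV : Fintype V]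
  n : ℕ
  ends : Fin n → Sym2 V

attribute [instance] OGraph.finV

namespace OGraph

variable (G : OGraph)

/-- Two vertices are related if some edge in `s` joins them. -/
def rel (s : Finset (Fin G.n)) (u v : G.V) : Prop := ∃ e ∈ s, G.ends e = s(u, v)

/-- The set of connected components of the spanning subgraph `[G:s]`. -/
def Comp (s : Finset (Fin G.n)) : Type := Quot (G.rel s)

/-- `k(s)`: the number of connected components of the spanning subgraph `[G:s]`. -/
noncomputable def ncomp (s : Finset (Fin G.n)) : ℕ := Nat.card (G.Comp s)

/-- The number of proper colorings of `G` with `m` colors: the value `P_G(m)` of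
the chromatic polynomial at the natural number `m`. -/
noncomputable def chromatic (m : ℕ) : ℕ :=
  Nat.card {c : G.V → Fin m // ∀ e u v, G.ends e = s(u, v) → c u ≠ c v}

end OGraph

namespace OGraph

/-- The map on quotients induced by an implication of relations. -/
def qmap {V : Type} {r r' : V → V → Prop} (h : ∀ u v, r u v → r' u v) :
    Quot r → Quot r' :=
  Quot.lift (Quot.mk r') fun u v huv => Quot.sound (h u v huv)

variable (G : OGraph)

/-- An enhanced state: a subset `s` of the edges together with an assignment of a
color (`1` or `x`; a component is "colored `x`" when the predicate holds) to each
connected component of the spanning subgraph `[G:s]`. -/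
abbrev EState := Σ s : Finset (Fin G.n), (G.Comp s → Prop)

/-- `j(S)`: the number of components colored `x` in the enhanced state `S`. -/
noncomputable def jdeg (S : G.EState) : ℕ := Nat.card {k : G.Comp S.1 // S.2 k}

open Classical in
/-- The enhanced state(s) obtained from `S` by adding the edge `e`: zero if `e`
already belongs to `S` or if the added edge merges two components both colored `x`
(the product `x∗x = 0`); otherwise the enhanced state on `insert e s` whose
coloring is obtained from that of `S` using the product
`1∗1 = 1`, `1∗x = x∗1 = x`. -/
noncomputable def addEdge (S : G.EState) (e : Fin G.n) : G.EState →₀ ℤ :=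
  if e ∈ S.1 then 0
  else
    let p : G.Comp S.1 → G.Comp (insert e S.1) :=
      qmap fun _ _ huv => huv.elim fun f hf => ⟨f, Finset.mem_insert_of_mem hf.1, hf.2⟩
    if ∃ k1 k2 : G.Comp S.1, k1 ≠ k2 ∧ p k1 = p k2 ∧ S.2 k1 ∧ S.2 k2 then 0
    else Finsupp.single ⟨insert e S.1, fun K => ∃ k, p k = K ∧ S.2 k⟩ 1

/-- The differential applied to a single enhanced state: the signed sum, over all
edges `e` not in `S`, of the states obtained by adding `e`; the sign is `(-1)^{n(e)}`
where `n(e)` is the number of edges of `S` ordered before `e`. -/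
noncomputable def dState (S : G.EState) : G.EState →₀ ℤ :=
  ∑ e : Fin G.n, ((-1 : ℤ) ^ (S.1.filter fun f => f < e).card) • G.addEdge S e

/-- The differential of the graph cohomology complex, as a linear endomorphism of
the free `ℤ`-module generated by all enhanced states. -/
noncomputable def diff : (G.EState →₀ ℤ) →ₗ[ℤ] (G.EState →₀ ℤ) :=
  Finsupp.lsum ℤ fun S => LinearMap.toSpanSingleton ℤ _ (G.dState S)

/-- The chain group `C^{i,j}(G)`: the free `ℤ`-module spanned by the enhanced
states with `i` edges and `j` components colored `x`, as a submodule of the free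
module on all enhanced states. -/
noncomputable def Cmod (i j : ℕ) : Submodule ℤ (G.EState →₀ ℤ) :=
  Finsupp.supported ℤ ℤ {S : G.EState | S.1.card = i ∧ G.jdeg S = j}

/-- The cocycles of bidegree `(i,j)`. -/
noncomputable def Zmod (i j : ℕ) : Submodule ℤ (G.EState →₀ ℤ) :=
  LinearMap.ker G.diff ⊓ G.Cmod i j

/-- The coboundaries: `0` for `i = 0`, the image of `C^{i,j}` for `i + 1`. -/
noncomputable def Bmod : ℕ → ℕ → Submodule ℤ (G.EState →₀ ℤ)
  | 0, _ => ⊥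
  | i + 1, j => Submodule.map G.diff (G.Cmod i j)

/-- The graph cohomology group `H^{i,j}(G)` (cocycles modulo coboundaries in
bidegree `(i,j)`). -/
noncomputable def Hmod (i j : ℕ) : Type :=
  (G.Zmod i j).toAddSubgroup ⧸
    (AddSubgroup.comap (G.Zmod i j).toAddSubgroup.subtype (G.Bmod i j).toAddSubgroup)

noncomputable instance (i j : ℕ) : AddCommGroup (G.Hmod i j) := by
  delta Hmod; infer_instance

end OGraph

/-- The cycle (circuit/polygon) graph `P_n` with vertices `0, …, n−1 ∈ Fin n` and
`n` edges, the `k`-th edge joining `k` to `k + 1 (mod n)`. -/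
def cycleGraph (n : ℕ) (hn : 0 < n) : OGraph :=
  ⟨Fin n, n, fun k => s(k, ⟨(k.val + 1) % n, Nat.mod_lt _ hn⟩)⟩

/-!
Cutting a cycle at an edge expresses its chains recursively through the chains of paths, all over
`ℤ[ε] = ℤ[x]/(x²)`. The chains of a path with `k` edges retract onto one copy of `ℤ[ε]`, spanned in
degree `0` by a class that moves from one end to the other at the cost of a sign: `x` at the first
vertex acts as `(-1) ^ k` times `x` at the last. Feeding this into the recursion, the chains of the
`(m + 1)`-cycle retract onto a small complex with one copy of `ℤ[ε]` in each degree `t < m`, whose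
differential is multiplication by `((-1) ^ t + (-1) ^ m) x`, hence alternately `0` and `± 2 x`.

The recursive model maps to the chains of any graph along a closed walk. For the walk around the
cycle graph this map is onto. It is injective as well, since the model has rank `3 ^ n + 1`, and
there are at least as many enhanced states.
-/

section Bigrading

variable {M N : Type*} [AddCommGroup M] [AddCommGroup N] {i j : ℤ}

/-- The part of bidegree `(i, j)` of a module whose bigrading is encoded by weight operators:
`w α β` multiplies a homogeneous element of bidegree `(i, j)` by `α * i + β * j`. -/
def bidegree (w : ℤ → ℤ → Module.End ℤ M) (i j : ℤ) : Submodule ℤ M :=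
  ⨅ α, ⨅ β, (w α β).eigenspace (α * i + β * j)

lemma mem_bidegree {w : ℤ → ℤ → Module.End ℤ M} {x : M} :
    x ∈ bidegree w i j ↔ ∀ α β, w α β x = (α * i + β * j) • x := by
  simp only [bidegree, Submodule.mem_iInf, Module.End.mem_eigenspace_iff]

lemma map_mem_bidegree {w : ℤ → ℤ → Module.End ℤ M} {w' : ℤ → ℤ → Module.End ℤ N}
    {φ : M →ₗ[ℤ] N} (hφ : ∀ α β x, w' α β (φ x) = φ (w α β x)) {x : M}
    (hx : x ∈ bidegree w i j) : φ x ∈ bidegree w' i j := by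
  rw [mem_bidegree] at hx ⊢
  intro α β
  rw [hφ, hx, map_smul]

/-- A deformation retraction of a complex `(M, d)` onto a complex `(N, d')`, compatible with
bigradings given by weight operators; the homotopy has bidegree `(-1, 0)`. -/
structure BigradedRetract (w : ℤ → ℤ → Module.End ℤ M) (d : Module.End ℤ M)
    (w' : ℤ → ℤ → Module.End ℤ N) (d' : Module.End ℤ N) where
  incl : N →ₗ[ℤ] M
  proj : M →ₗ[ℤ] N
  homotopy : Module.End ℤ M
  d_incl (y : N) : d (incl y) = incl (d' y)
  proj_d (x : M) : proj (d x) = d' (proj x)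
  proj_incl (y : N) : proj (incl y) = y
  incl_proj_add (x : M) : incl (proj x) + d (homotopy x) + homotopy (d x) = x
  weight_incl (α β : ℤ) (y : N) : w α β (incl y) = incl (w' α β y)
  weight_proj (α β : ℤ) (x : M) : w' α β (proj x) = proj (w α β x)
  weight_homotopy (α β : ℤ) (x : M) : w α β (homotopy x) = homotopy (w α β x) - α • homotopy x

variable {w : ℤ → ℤ → Module.End ℤ M} {d : Module.End ℤ M} {w' : ℤ → ℤ → Module.End ℤ N}
  {d' : Module.End ℤ N}

/-- Transport of the ambient complex of a retraction along an isomorphism. -/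
def BigradedRetract.congr {L : Type*} [AddCommGroup L] {w₀ : ℤ → ℤ → Module.End ℤ L}
    {d₀ : Module.End ℤ L} (r : BigradedRetract w d w' d') (Θ : M ≃ₗ[ℤ] L)
    (hd : ∀ x, d₀ (Θ x) = Θ (d x)) (hw : ∀ α β x, w₀ α β (Θ x) = Θ (w α β x)) :
    BigradedRetract w₀ d₀ w' d' where
  incl := Θ ∘ₗ r.incl
  proj := r.proj ∘ₗ Θ.symm
  homotopy := Θ ∘ₗ r.homotopy ∘ₗ Θ.symm
  d_incl y := by simp [hd, r.d_incl]
  proj_d x := by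
    obtain ⟨x, rfl⟩ := Θ.surjective x
    simp [hd, r.proj_d]
  proj_incl y := by simp [r.proj_incl]
  incl_proj_add x := by
    obtain ⟨x, rfl⟩ := Θ.surjective x
    simp [hd, ← map_add, r.incl_proj_add]
  weight_incl α β y := by simp [hw, r.weight_incl]
  weight_proj α β x := by
    obtain ⟨x, rfl⟩ := Θ.surjective x
    simp [hw, r.weight_proj]
  weight_homotopy α β x := by
    obtain ⟨x, rfl⟩ := Θ.surjective x
    simp [hw, r.weight_homotopy]

namespace BigradedRetract

variable (r : BigradedRetract w d w' d')

lemma homotopy_mem_bidegree {x : M} (hx : x ∈ bidegree w i j) :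
    r.homotopy x ∈ bidegree w (i - 1) j := by
  rw [mem_bidegree] at hx ⊢
  intro α β
  rw [r.weight_homotopy, hx, map_smul, ← sub_smul]
  congr 1
  ring

lemma exists_d_eq_iff {z : M} (hz : z ∈ bidegree w i j) (hdz : d z = 0) :
    (∃ h ∈ bidegree w (i - 1) j, d h = z) ↔
      ∃ h ∈ bidegree w' (i - 1) j, d' h = r.proj z := by
  constructor
  · rintro ⟨h, hh, rfl⟩
    exact ⟨r.proj h, map_mem_bidegree r.weight_proj hh, (r.proj_d h).symm⟩
  · rintro ⟨h, hh, hdh⟩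
    refine ⟨r.incl h + r.homotopy z, add_mem (map_mem_bidegree r.weight_incl hh)
      (r.homotopy_mem_bidegree hz), ?_⟩
    simpa [hdz, r.d_incl, hdh] using r.incl_proj_add z

end BigradedRetract

end Bigrading

section Model

open scoped DualNumber

/-- Basis words for the chains of a path with `k` edges over the algebra of its last vertex. The
first letter of a nonempty word tells whether the first edge is present, absent with its first
vertex colored `1`, or absent with its first vertex colored `x`. -/
def PathWord : ℕ → Type
  | 0 => Unit
  | k + 1 => PathWord k ⊕ PathWord k ⊕ PathWord k

/-- Basis words for the chains of a cycle with `k` edges over the algebra of its base point: either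
the first edge is absent and a path with `k - 1` edges remains, or it is present and contracting it
leaves a cycle with `k - 1` edges. -/
def CycleWord : ℕ → Type
  | 0 => Unit
  | k + 1 => PathWord k ⊕ CycleWord k

/-- The chains of a path with `k` edges, as a free module over the algebra `ℤ[x]/(x²)` of its last
vertex. -/
abbrev PathChain (k : ℕ) : Type := PathWord k → ℤ[ε]

/-- The chains of a cycle with `k` edges, as a free module over the algebra `ℤ[x]/(x²)` of its base
point. The cycle without edges is a single vertex. -/
abbrev CycleChain (k : ℕ) : Type := CycleWord k → ℤ[ε]

/-- Assembles a chain on a path from its parts according to the first letter. -/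
def pathCons (k : ℕ) :
    (PathChain k × PathChain k × PathChain k) ≃ₗ[ℤ[ε]] PathChain (k + 1) :=
  ((LinearEquiv.refl _ _).prodCongr (LinearEquiv.sumArrowLequivProdArrow _ _ _ _).symm).trans
    (LinearEquiv.sumArrowLequivProdArrow _ _ _ _).symm

/-- Assembles a chain on a cycle from its parts without and with the first edge. -/
def cycleCons (k : ℕ) : (PathChain k × CycleChain k) ≃ₗ[ℤ[ε]] CycleChain (k + 1) :=
  (LinearEquiv.sumArrowLequivProdArrow _ _ _ _).symm

/-- The part of a chain on a path in which the first edge is present. -/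
def edgePart (k : ℕ) : PathChain (k + 1) →ₗ[ℤ[ε]] PathChain k :=
  .funLeft _ _ Sum.inl

/-- The part of a chain on a path in which the first edge is absent and the first vertex has
color `1`. -/
def onePart (k : ℕ) : PathChain (k + 1) →ₗ[ℤ[ε]] PathChain k :=
  .funLeft _ _ (Sum.inr ∘ Sum.inl)

/-- The part of a chain on a path in which the first edge is absent and the first vertex has
color `x`. -/
def xPart (k : ℕ) : PathChain (k + 1) →ₗ[ℤ[ε]] PathChain k :=
  .funLeft _ _ (Sum.inr ∘ Sum.inr)

/-- The part of a chain on a cycle in which the first edge is absent. -/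
def pathPart (k : ℕ) : CycleChain (k + 1) →ₗ[ℤ[ε]] PathChain k :=
  .funLeft _ _ Sum.inl

/-- The part of a chain on a cycle in which the first edge is present. -/
def cyclePart (k : ℕ) : CycleChain (k + 1) →ₗ[ℤ[ε]] CycleChain k :=
  .funLeft _ _ Sum.inr

/-- Multiplication by the variable of the component of the first vertex of a path. -/
def pathHeadMul : (k : ℕ) → Module.End ℤ[ε] (PathChain k)
  | 0 => (ε : ℤ[ε]) • .id
  | k + 1 => (pathCons k).toLinearMap ∘ₗ
      (pathHeadMul k ∘ₗ edgePart k).prod (.prod 0 (onePart k))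

/-- The differential of a path. -/
def pathDiff : (k : ℕ) → Module.End ℤ[ε] (PathChain k)
  | 0 => 0
  | k + 1 => (pathCons k).toLinearMap ∘ₗ
      (onePart k + pathHeadMul k ∘ₗ xPart k - pathDiff k ∘ₗ edgePart k).prod
        ((pathDiff k ∘ₗ onePart k).prod (pathDiff k ∘ₗ xPart k))

/-- The map induced on chains by identifying the two ends of a path. -/
def pathClose : (k : ℕ) → PathChain k →ₗ[ℤ[ε]] CycleChain k
  | 0 => .funLeft _ _ fun _ => ()
  | k + 1 => (cycleCons k).toLinearMap ∘ₗ
      (onePart k + (ε : ℤ[ε]) • xPart k).prod (pathClose k ∘ₗ edgePart k)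

/-- The differential of a cycle. -/
def cycleDiff : (k : ℕ) → Module.End ℤ[ε] (CycleChain k)
  | 0 => 0
  | k + 1 => (cycleCons k).toLinearMap ∘ₗ
      (pathDiff k ∘ₗ pathPart k).prod (pathClose k ∘ₗ pathPart k - cycleDiff k ∘ₗ cyclePart k)

section Recursion

variable {k : ℕ} (p q r : PathChain k) (c : CycleChain k)

lemma pathHeadMul_zero (f : PathChain 0) : pathHeadMul 0 f = (ε : ℤ[ε]) • f := rfl

lemma pathHeadMul_cons :
    pathHeadMul (k + 1) (pathCons k (p, q, r)) = pathCons k (pathHeadMul k p, 0, q) := rfl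

lemma pathDiff_zero (f : PathChain 0) : pathDiff 0 f = 0 := rfl

lemma pathDiff_cons : pathDiff (k + 1) (pathCons k (p, q, r)) =
    pathCons k (q + pathHeadMul k r - pathDiff k p, pathDiff k q, pathDiff k r) := rfl

lemma pathClose_cons : pathClose (k + 1) (pathCons k (p, q, r)) =
    cycleCons k (q + (ε : ℤ[ε]) • r, pathClose k p) := rfl

lemma cycleDiff_zero (f : CycleChain 0) : cycleDiff 0 f = 0 := rfl

lemma cycleDiff_cons : cycleDiff (k + 1) (cycleCons k (p, c)) =
    cycleCons k (pathDiff k p, pathClose k p - cycleDiff k c) := rfl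

end Recursion

lemma eps_smul_eps_smul {M : Type*} [AddCommGroup M] [Module ℤ[ε] M] (x : M) :
    (ε : ℤ[ε]) • (ε : ℤ[ε]) • x = 0 := by
  rw [smul_smul, DualNumber.eps_mul_eps, zero_smul]

lemma pathHeadMul_pathHeadMul : ∀ {k : ℕ} (f : PathChain k), pathHeadMul k (pathHeadMul k f) = 0
  | 0, f => eps_smul_eps_smul f
  | k + 1, f => by
    obtain ⟨⟨p, q, r⟩, rfl⟩ := (pathCons k).surjective f
    simp [pathHeadMul_cons, pathHeadMul_pathHeadMul]

lemma pathDiff_pathHeadMul : ∀ {k : ℕ} (f : PathChain k),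
    pathDiff k (pathHeadMul k f) = pathHeadMul k (pathDiff k f)
  | 0, f => by simp [pathDiff_zero]
  | k + 1, f => by
    obtain ⟨⟨p, q, r⟩, rfl⟩ := (pathCons k).surjective f
    simp [pathHeadMul_cons, pathDiff_cons, pathDiff_pathHeadMul, pathHeadMul_pathHeadMul]

lemma pathClose_pathHeadMul : ∀ {k : ℕ} (f : PathChain k),
    pathClose k (pathHeadMul k f) = (ε : ℤ[ε]) • pathClose k f
  | 0, _ => rfl
  | k + 1, f => by
    obtain ⟨⟨p, q, r⟩, rfl⟩ := (pathCons k).surjective f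
    rw [pathHeadMul_cons, pathClose_cons, pathClose_cons, pathClose_pathHeadMul,
      ← map_smul (cycleCons k), Prod.smul_mk, smul_add, eps_smul_eps_smul, zero_add, add_zero]

lemma cycleDiff_pathClose : ∀ {k : ℕ} (f : PathChain k),
    cycleDiff k (pathClose k f) = pathClose k (pathDiff k f)
  | 0, f => by simp [pathDiff_zero, cycleDiff_zero]
  | k + 1, f => by
    obtain ⟨⟨p, q, r⟩, rfl⟩ := (pathCons k).surjective f
    simp [pathClose_cons, pathDiff_cons, cycleDiff_cons, cycleDiff_pathClose,
      pathClose_pathHeadMul]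

/-- The inclusion of the algebra of the last vertex as the cocycles of degree `0` of a path. -/
def pathIncl : (k : ℕ) → ℤ[ε] →ₗ[ℤ[ε]] PathChain k
  | 0 => .pi fun _ => .id
  | k + 1 => (pathCons k).toLinearMap ∘ₗ
      .prod 0 (.prod (-(pathHeadMul k ∘ₗ pathIncl k)) (pathIncl k))

/-- The retraction of the chains of a path onto the algebra of its last vertex. -/
def pathProj : (k : ℕ) → PathChain k →ₗ[ℤ[ε]] ℤ[ε]
  | 0 => .proj ()
  | k + 1 => pathProj k ∘ₗ xPart k

/-- The homotopy between the identity of a path and the retraction onto its last vertex. -/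
def pathHomotopy : (k : ℕ) → Module.End ℤ[ε] (PathChain k)
  | 0 => 0
  | k + 1 => (pathCons k).toLinearMap ∘ₗ .prod 0 (.prod
      (edgePart k - pathHeadMul k ∘ₗ pathHomotopy k ∘ₗ xPart k) (pathHomotopy k ∘ₗ xPart k))

section Recursion

variable {k : ℕ} (p q r : PathChain k) (a : ℤ[ε])

lemma pathIncl_succ :
    pathIncl (k + 1) a = pathCons k (0, -pathHeadMul k (pathIncl k a), pathIncl k a) := rfl

lemma pathProj_cons : pathProj (k + 1) (pathCons k (p, q, r)) = pathProj k r := rfl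

lemma pathHomotopy_cons : pathHomotopy (k + 1) (pathCons k (p, q, r)) =
    pathCons k (0, p - pathHeadMul k (pathHomotopy k r), pathHomotopy k r) := rfl

end Recursion

lemma pathProj_pathIncl : ∀ {k : ℕ} (a : ℤ[ε]), pathProj k (pathIncl k a) = a
  | 0, _ => rfl
  | k + 1, a => pathProj_pathIncl (k := k) a

lemma pathDiff_pathIncl : ∀ {k : ℕ} (a : ℤ[ε]), pathDiff k (pathIncl k a) = 0
  | 0, _ => rfl
  | k + 1, a => by
    simp [pathIncl_succ, pathDiff_cons, pathDiff_pathHeadMul, pathDiff_pathIncl]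

lemma pathProj_pathDiff : ∀ {k : ℕ} (f : PathChain k), pathProj k (pathDiff k f) = 0
  | 0, _ => rfl
  | k + 1, f => by
    obtain ⟨⟨p, q, r⟩, rfl⟩ := (pathCons k).surjective f
    rw [pathDiff_cons, pathProj_cons, pathProj_pathDiff]

lemma pathHomotopy_pathIncl : ∀ {k : ℕ} (a : ℤ[ε]), pathHomotopy k (pathIncl k a) = 0
  | 0, _ => rfl
  | k + 1, a => by simp [pathIncl_succ, pathHomotopy_cons, pathHomotopy_pathIncl]

lemma pathIncl_pathProj_add : ∀ {k : ℕ} (f : PathChain k),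
    pathIncl k (pathProj k f) + pathDiff k (pathHomotopy k f) + pathHomotopy k (pathDiff k f) = f
  | 0, f => by
    rw [pathDiff_zero, pathDiff_zero, map_zero, add_zero, add_zero]
    rfl
  | k + 1, f => by
    obtain ⟨⟨p, q, r⟩, rfl⟩ := (pathCons k).surjective f
    have ih := pathIncl_pathProj_add r
    have hr : pathIncl k (pathProj k r) =
      r - pathDiff k (pathHomotopy k r) - pathHomotopy k (pathDiff k r) := by
      rw [eq_sub_iff_add_eq, eq_sub_iff_add_eq, add_right_comm, ih]
    simp only [pathProj_cons, pathIncl_succ, pathHomotopy_cons, pathDiff_cons, hr, map_sub,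
      map_zero, pathDiff_pathHeadMul, ← map_add, Prod.mk_add_mk]
    congr 3 <;> abel

lemma pathHeadMul_pathIncl : ∀ {k : ℕ} (a : ℤ[ε]),
    pathHeadMul k (pathIncl k a) = ((-1) ^ k * ε : ℤ[ε]) • pathIncl k a
  | 0, a => by rw [pow_zero, one_mul, pathHeadMul_zero]
  | k + 1, a => by
    have hsq : ((-1) ^ k * ε : ℤ[ε]) * ((-1) ^ k * ε) = 0 := by
      rw [mul_mul_mul_comm, DualNumber.eps_mul_eps, mul_zero]
    rw [pathIncl_succ, pathHeadMul_cons, pathHeadMul_pathIncl, ← map_smul (pathCons k)]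
    simp only [Prod.smul_mk, Prod.neg_mk, smul_neg, smul_smul, hsq, map_zero, smul_zero, zero_smul,
      neg_zero, pow_succ, mul_neg_one, neg_mul, neg_smul]

lemma pathClose_pathIncl {k : ℕ} (a : ℤ[ε]) : pathClose (k + 1) (pathIncl (k + 1) a) =
    cycleCons k (pathIncl k (((1 - (-1) ^ k) * ε : ℤ[ε]) • a), 0) := by
  rw [pathIncl_succ, pathClose_cons, pathHeadMul_pathIncl, map_zero, map_smul]
  congr 2
  module

/-- The complex with one copy of `ℤ[x]/(x²)` in each degree `t < m`, onto which the chains of the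
cycle with `m + 1` edges retract. -/
abbrev SmallChain (m : ℕ) : Type := Fin m → ℤ[ε]

/-- The differential of the small complex, alternately `0` and multiplication by `± 2 x`. -/
def smallDiff : (m : ℕ) → Module.End ℤ[ε] (SmallChain m)
  | 0 => 0
  | m + 1 => .pi <| Fin.cases 0 fun t : Fin m =>
      (((-1) ^ (t : ℕ) + (-1) ^ (m + 1)) * ε : ℤ[ε]) • .proj t.castSucc

lemma smallDiff_zero {m : ℕ} (b : SmallChain (m + 1)) : smallDiff (m + 1) b 0 = 0 := rfl

lemma smallDiff_succ {m : ℕ} (b : SmallChain (m + 1)) (t : Fin m) :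
    smallDiff (m + 1) b t.succ =
      (((-1) ^ (t : ℕ) + (-1) ^ (m + 1)) * ε : ℤ[ε]) • b t.castSucc := rfl

/-- The component of the small differential that leaves degree `0`, with the remaining degrees
renumbered. -/
def smallConnecting : (m : ℕ) → ℤ[ε] →ₗ[ℤ[ε]] SmallChain m
  | 0 => 0
  | m + 1 => .single _ _ 0 ∘ₗ (((1 - (-1) ^ (m + 1)) * ε : ℤ[ε]) • .id)

lemma smallDiff_cons : ∀ {m : ℕ} (a : ℤ[ε]) (b : SmallChain m),
    smallDiff (m + 1) (Fin.cons a b) = Fin.cons 0 (smallConnecting m a - smallDiff m b)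
  | 0, a, b => by
    ext t : 1
    rw [Fin.fin_one_eq_zero t]
    rfl
  | m + 1, a, b => by
    ext t : 1
    cases t using Fin.cases with
    | zero => rfl
    | succ t =>
      rw [smallDiff_succ, Fin.cons_succ, Pi.sub_apply]
      cases t using Fin.cases with
      | zero =>
        simp only [smallDiff_zero, smallConnecting, LinearMap.comp_apply, LinearMap.single_apply,
          LinearMap.smul_apply, LinearMap.id_apply, Pi.single_eq_same, Fin.castSucc_zero,
          Fin.cons_zero, Fin.val_zero, sub_zero, pow_succ, pow_zero]
        congr 1
        ring
      | succ t =>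
        simp only [smallDiff_succ, smallConnecting, LinearMap.comp_apply, LinearMap.single_apply,
          Pi.single_eq_of_ne (Fin.succ_ne_zero t), ← Fin.succ_castSucc, Fin.cons_succ,
          Fin.val_succ, zero_sub, pow_succ, ← neg_smul]
        congr 1
        ring

/-- The inclusion of the small complex into the chains of a cycle. -/
def cycleIncl : (m : ℕ) → SmallChain m →ₗ[ℤ[ε]] CycleChain (m + 1)
  | 0 => 0
  | m + 1 => (cycleCons (m + 1)).toLinearMap ∘ₗ
      (pathIncl (m + 1) ∘ₗ .proj 0).prod (cycleIncl m ∘ₗ .funLeft _ _ Fin.succ)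

/-- The retraction of the chains of a cycle onto the small complex. -/
def cycleProj : (m : ℕ) → CycleChain (m + 1) →ₗ[ℤ[ε]] SmallChain m
  | 0 => 0
  | m + 1 => (Fin.consLinearEquiv ℤ[ε] fun _ => ℤ[ε]).toLinearMap ∘ₗ
      (pathProj (m + 1) ∘ₗ pathPart (m + 1)).prod
        (cycleProj m ∘ₗ (cyclePart (m + 1) -
          pathClose (m + 1) ∘ₗ pathHomotopy (m + 1) ∘ₗ pathPart (m + 1)))

/-- The homotopy between the identity of a cycle and the retraction onto the small complex. -/
def cycleHomotopy : (m : ℕ) → Module.End ℤ[ε] (CycleChain (m + 1))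
  | 0 => (cycleCons 0).toLinearMap ∘ₗ .prod (.funLeft _ _ (fun _ => ()) ∘ₗ cyclePart 0) 0
  | m + 1 => (cycleCons (m + 1)).toLinearMap ∘ₗ
      (pathHomotopy (m + 1) ∘ₗ pathPart (m + 1)).prod
        (-(cycleHomotopy m ∘ₗ (cyclePart (m + 1) -
          pathClose (m + 1) ∘ₗ pathHomotopy (m + 1) ∘ₗ pathPart (m + 1))))

lemma cycleHomotopy_zero_cons (p : PathChain 0) (c : CycleChain 0) :
    cycleHomotopy 0 (cycleCons 0 (p, c)) = cycleCons 0 (fun _ => c (), 0) := rfl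

section Recursion

variable {m : ℕ} (a : ℤ[ε]) (b : SmallChain m) (p : PathChain (m + 1)) (c : CycleChain (m + 1))

lemma cycleIncl_cons : cycleIncl (m + 1) (Fin.cons a b) =
    cycleCons (m + 1) (pathIncl (m + 1) a, cycleIncl m b) := rfl

lemma cycleProj_cons : cycleProj (m + 1) (cycleCons (m + 1) (p, c)) =
    Fin.cons (pathProj (m + 1) p)
      (cycleProj m (c - pathClose (m + 1) (pathHomotopy (m + 1) p))) := rfl

lemma cycleHomotopy_cons : cycleHomotopy (m + 1) (cycleCons (m + 1) (p, c)) =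
    cycleCons (m + 1) (pathHomotopy (m + 1) p,
      -cycleHomotopy m (c - pathClose (m + 1) (pathHomotopy (m + 1) p))) := rfl

end Recursion

lemma pathClose_pathIncl_eq_cycleIncl : ∀ {m : ℕ} (a : ℤ[ε]),
    pathClose (m + 1) (pathIncl (m + 1) a) = cycleIncl m (smallConnecting m a)
  | 0, a => by simp [pathClose_pathIncl, cycleIncl]
  | m + 1, a => by
    have hsingle : smallConnecting (m + 1) a =
        Fin.cons (((1 - (-1) ^ (m + 1)) * ε : ℤ[ε]) • a) 0 := by
      ext t : 1
      cases t using Fin.cases <;> simp [smallConnecting]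
    rw [pathClose_pathIncl, hsingle, cycleIncl_cons, map_zero]

lemma cycleDiff_cycleIncl : ∀ {m : ℕ} (b : SmallChain m),
    cycleDiff (m + 1) (cycleIncl m b) = cycleIncl m (smallDiff m b)
  | 0, _ => map_zero _
  | m + 1, b => by
    obtain ⟨a, b, rfl⟩ := Fin.exists_cons b
    rw [cycleIncl_cons, cycleDiff_cons, smallDiff_cons, cycleIncl_cons, pathDiff_pathIncl, map_zero,
      map_sub, pathClose_pathIncl_eq_cycleIncl, cycleDiff_cycleIncl]

lemma cycleProj_cycleIncl : ∀ {m : ℕ} (b : SmallChain m), cycleProj m (cycleIncl m b) = b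
  | 0, _ => Subsingleton.elim _ _
  | m + 1, b => by
    obtain ⟨a, b, rfl⟩ := Fin.exists_cons b
    rw [cycleIncl_cons, cycleProj_cons, pathProj_pathIncl, pathHomotopy_pathIncl, map_zero,
      sub_zero, cycleProj_cycleIncl]

lemma cycleHomotopy_cycleIncl : ∀ {m : ℕ} (b : SmallChain m), cycleHomotopy m (cycleIncl m b) = 0
  | 0, _ => map_zero _
  | m + 1, b => by
    obtain ⟨a, b, rfl⟩ := Fin.exists_cons b
    rw [cycleIncl_cons, cycleHomotopy_cons, pathHomotopy_pathIncl, map_zero, sub_zero,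
      cycleHomotopy_cycleIncl, neg_zero, Prod.mk_zero_zero, map_zero]

lemma pathClose_sub_pathClose_pathHomotopy_pathDiff {m : ℕ} (p : PathChain (m + 1)) :
    pathClose (m + 1) p - pathClose (m + 1) (pathHomotopy (m + 1) (pathDiff (m + 1) p)) =
      cycleIncl m (smallConnecting m (pathProj (m + 1) p)) +
        cycleDiff (m + 1) (pathClose (m + 1) (pathHomotopy (m + 1) p)) := by
  rw [cycleDiff_pathClose, ← pathClose_pathIncl_eq_cycleIncl, ← map_add, ← map_sub]
  congr 1
  rw [sub_eq_iff_eq_add, pathIncl_pathProj_add]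

lemma cycleProj_cycleDiff : ∀ {m : ℕ} (c : CycleChain (m + 1)),
    cycleProj m (cycleDiff (m + 1) c) = smallDiff m (cycleProj m c)
  | 0, _ => rfl
  | m + 1, c => by
    obtain ⟨⟨p, c⟩, rfl⟩ := (cycleCons (m + 1)).surjective c
    rw [cycleDiff_cons, cycleProj_cons, cycleProj_cons, smallDiff_cons, pathProj_pathDiff,
      sub_right_comm, pathClose_sub_pathClose_pathHomotopy_pathDiff, ← cycleProj_cycleDiff,
      add_sub_assoc, map_add, cycleProj_cycleIncl, map_sub (cycleDiff _), map_sub, map_sub]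
    congr 1
    abel

lemma cycleIncl_cycleProj_add : ∀ {m : ℕ} (c : CycleChain (m + 1)),
    cycleIncl m (cycleProj m c) + cycleDiff (m + 1) (cycleHomotopy m c) +
      cycleHomotopy m (cycleDiff (m + 1) c) = c
  | 0, c => by
    obtain ⟨⟨p, c⟩, rfl⟩ := (cycleCons 0).surjective c
    rw [cycleHomotopy_zero_cons, cycleDiff_cons, cycleDiff_cons, cycleHomotopy_zero_cons,
      pathDiff_zero, cycleDiff_zero, cycleDiff_zero, sub_zero, sub_zero, add_assoc, ← map_add,
      Prod.mk_add_mk]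
    exact (zero_add _).trans
      (congrArg (cycleCons 0) (Prod.ext (zero_add p) (add_zero c)))
  | m + 1, c => by
    obtain ⟨⟨p, c⟩, rfl⟩ := (cycleCons (m + 1)).surjective c
    have ih := cycleIncl_cycleProj_add (c - pathClose (m + 1) (pathHomotopy (m + 1) p))
    rw [cycleProj_cons, cycleIncl_cons, cycleHomotopy_cons, cycleDiff_cons, cycleDiff_cons,
      cycleHomotopy_cons, sub_right_comm, pathClose_sub_pathClose_pathHomotopy_pathDiff,
      add_sub_assoc, map_add (cycleHomotopy m), cycleHomotopy_cycleIncl, ← map_add, ← map_add,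
      Prod.mk_add_mk, Prod.mk_add_mk, pathIncl_pathProj_add]
    congr 2
    simp only [map_sub, map_neg] at ih ⊢
    linear_combination (norm := module) ih

/-- The operator on `ℤ[x]/(x²)` that kills `1` and fixes `x`. -/
def euler : Module.End ℤ ℤ[ε] := TrivSqZeroExt.inrHom ℤ ℤ ∘ₗ TrivSqZeroExt.sndHom ℤ ℤ

lemma euler_eps_mul (a : ℤ[ε]) : euler (ε * a) = ε * euler a + ε * a := by
  ext <;> simp [euler]

/-- The operator on the chains of a path that weights each edge by `α` and each color `x` by `β`. -/
def pathWeight (α β : ℤ) : (k : ℕ) → Module.End ℤ (PathChain k)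
  | 0 => β • euler.compLeft _
  | k + 1 => (pathCons k).toLinearMap.restrictScalars ℤ ∘ₗ
      ((pathWeight α β k + α • .id) ∘ₗ (edgePart k).restrictScalars ℤ).prod
        ((pathWeight α β k ∘ₗ (onePart k).restrictScalars ℤ).prod
          ((pathWeight α β k + β • .id) ∘ₗ (xPart k).restrictScalars ℤ))

/-- The operator on the chains of a cycle that weights each edge by `α` and each color `x`
by `β`. -/
def cycleWeight (α β : ℤ) : (k : ℕ) → Module.End ℤ (CycleChain k)
  | 0 => β • euler.compLeft _
  | k + 1 => (cycleCons k).toLinearMap.restrictScalars ℤ ∘ₗ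
      (pathWeight α β k ∘ₗ (pathPart k).restrictScalars ℤ).prod
        ((cycleWeight α β k + α • .id) ∘ₗ (cyclePart k).restrictScalars ℤ)

/-- The weight operators of the small complex, where the copy of `ℤ[x]/(x²)` in degree `t` starts in
bidegree `(t, m - t)`. -/
def smallWeight (α β : ℤ) (m : ℕ) : Module.End ℤ (SmallChain m) :=
  .pi fun t => ((α * t + β * (m - t)) • .id + β • euler) ∘ₗ .proj t

section Recursion

variable (α β : ℤ) {k m : ℕ} (p q r : PathChain k) (c : CycleChain k) (a : ℤ[ε]) (b : SmallChain m)

lemma pathWeight_cons : pathWeight α β (k + 1) (pathCons k (p, q, r)) =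
    pathCons k (pathWeight α β k p + α • p, pathWeight α β k q, pathWeight α β k r + β • r) := rfl

lemma cycleWeight_cons : cycleWeight α β (k + 1) (cycleCons k (p, c)) =
    cycleCons k (pathWeight α β k p, cycleWeight α β k c + α • c) := rfl

lemma smallWeight_apply (t : Fin m) :
    smallWeight α β m b t = (α * t + β * (m - t)) • b t + β • euler (b t) := rfl

lemma smallWeight_cons : smallWeight α β (m + 1) (Fin.cons a b) =
    Fin.cons ((β * (m + 1)) • a + β • euler a) (smallWeight α β m b + α • b) := by
  ext t : 1
  cases t using Fin.cases with
  | zero => simp [smallWeight_apply]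
  | succ t =>
    simp only [smallWeight_apply, Fin.cons_succ, Pi.add_apply, Pi.smul_apply, Fin.val_succ]
    push_cast
    module

end Recursion

section Weights

variable {α β : ℤ}

lemma pathWeight_eps_smul : ∀ {k : ℕ} (f : PathChain k),
    pathWeight α β k ((ε : ℤ[ε]) • f) =
      (ε : ℤ[ε]) • pathWeight α β k f + β • (ε : ℤ[ε]) • f
  | 0, f => by
    ext w : 1
    exact (congrArg (β • ·) (euler_eps_mul (f w))).trans
      ((smul_add _ _ _).trans (congrArg (· + _) (mul_smul_comm _ _ _).symm))
  | k + 1, f => by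
    obtain ⟨⟨p, q, r⟩, rfl⟩ := (pathCons k).surjective f
    simp only [← map_smul (pathCons k), Prod.smul_mk, pathWeight_cons, pathWeight_eps_smul]
    rw [← map_zsmul (pathCons k), ← map_add]
    congr 1
    simp only [Prod.smul_mk, Prod.mk_add_mk]
    congr 1
    · module
    · congr 1
      module

lemma pathWeight_pathHeadMul : ∀ {k : ℕ} (f : PathChain k),
    pathWeight α β k (pathHeadMul k f) =
      pathHeadMul k (pathWeight α β k f) + β • pathHeadMul k f
  | 0, f => pathWeight_eps_smul f
  | k + 1, f => by
    obtain ⟨⟨p, q, r⟩, rfl⟩ := (pathCons k).surjective f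
    simp only [pathHeadMul_cons, pathWeight_cons, pathWeight_pathHeadMul, map_add, map_zsmul]
    rw [← map_zsmul (pathCons k), ← map_add]
    simp only [Prod.smul_mk, Prod.mk_add_mk, map_zero, smul_zero, add_zero]
    congr 2
    module

lemma cycleWeight_pathClose : ∀ {k : ℕ} (f : PathChain k),
    cycleWeight α β k (pathClose k f) = pathClose k (pathWeight α β k f)
  | 0, _ => rfl
  | k + 1, f => by
    obtain ⟨⟨p, q, r⟩, rfl⟩ := (pathCons k).surjective f
    simp only [pathClose_cons, pathWeight_cons, cycleWeight_cons, map_add, pathWeight_eps_smul,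
      cycleWeight_pathClose, map_zsmul]
    congr 2
    module

lemma pathWeight_pathIncl : ∀ {k : ℕ} (a : ℤ[ε]),
    pathWeight α β k (pathIncl k a) = pathIncl k ((β * k) • a + β • euler a)
  | 0, a => by
    rw [Nat.cast_zero, mul_zero, zero_smul, zero_add]
    rfl
  | k + 1, a => by
    rw [pathIncl_succ, pathIncl_succ, pathWeight_cons, map_neg, pathWeight_pathHeadMul,
      pathWeight_pathIncl, map_zero, smul_zero, add_zero, ← map_zsmul (pathHeadMul k),
      ← map_zsmul (pathIncl k), ← map_add (pathHeadMul k), ← map_add (pathIncl k)]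
    have hweight : (β * k) • a + β • euler a + β • a =
        (β * (k + 1 : ℕ)) • a + β • euler a := by
      push_cast
      module
    rw [hweight]

lemma pathProj_pathWeight : ∀ {k : ℕ} (f : PathChain k),
    pathProj k (pathWeight α β k f) = (β * k) • pathProj k f + β • euler (pathProj k f)
  | 0, f => by
    rw [Nat.cast_zero, mul_zero, zero_smul, zero_add]
    rfl
  | k + 1, f => by
    obtain ⟨⟨p, q, r⟩, rfl⟩ := (pathCons k).surjective f
    rw [pathWeight_cons, pathProj_cons, pathProj_cons, map_add, pathProj_pathWeight, map_zsmul]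
    push_cast
    module

lemma pathWeight_pathHomotopy : ∀ {k : ℕ} (f : PathChain k),
    pathWeight α β k (pathHomotopy k f) =
      pathHomotopy k (pathWeight α β k f) - α • pathHomotopy k f
  | 0, f => by
    rw [pathHomotopy, LinearMap.zero_apply, LinearMap.zero_apply, map_zero, smul_zero, sub_zero]
  | k + 1, f => by
    obtain ⟨⟨p, q, r⟩, rfl⟩ := (pathCons k).surjective f
    simp only [pathHomotopy_cons, pathWeight_cons, pathWeight_pathHomotopy, map_add, map_sub,
      map_zero, map_zsmul, pathWeight_pathHeadMul]
    rw [← map_zsmul (pathCons k), ← map_sub]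
    simp only [Prod.smul_mk, Prod.mk_sub_mk, smul_zero, add_zero, sub_zero]
    congr 2
    congr 1 <;> module

lemma cycleWeight_cycleIncl : ∀ {m : ℕ} (b : SmallChain m),
    cycleWeight α β (m + 1) (cycleIncl m b) = cycleIncl m (smallWeight α β m b)
  | 0, _ => map_zero _
  | m + 1, b => by
    obtain ⟨a, b, rfl⟩ := Fin.exists_cons b
    rw [cycleIncl_cons, cycleWeight_cons, smallWeight_cons, cycleIncl_cons, pathWeight_pathIncl,
      cycleWeight_cycleIncl, map_add (cycleIncl m), map_zsmul (cycleIncl m), Nat.cast_succ]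

lemma smallWeight_cycleProj : ∀ {m : ℕ} (c : CycleChain (m + 1)),
    smallWeight α β m (cycleProj m c) = cycleProj m (cycleWeight α β (m + 1) c)
  | 0, _ => Subsingleton.elim _ _
  | m + 1, c => by
    obtain ⟨⟨p, c⟩, rfl⟩ := (cycleCons (m + 1)).surjective c
    rw [cycleProj_cons, cycleWeight_cons, cycleProj_cons, smallWeight_cons, pathProj_pathWeight,
      smallWeight_cycleProj, ← map_zsmul (cycleProj m), ← map_add (cycleProj m), Nat.cast_succ]
    congr 2
    rw [map_sub, cycleWeight_pathClose, pathWeight_pathHomotopy, map_sub, map_zsmul]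
    module

lemma cycleWeight_cycleHomotopy : ∀ {m : ℕ} (c : CycleChain (m + 1)),
    cycleWeight α β (m + 1) (cycleHomotopy m c) =
      cycleHomotopy m (cycleWeight α β (m + 1) c) - α • cycleHomotopy m c
  | 0, c => by
    obtain ⟨⟨p, c⟩, rfl⟩ := (cycleCons 0).surjective c
    have hpath : pathWeight α β 0 (fun _ => c ()) = fun _ => cycleWeight α β 0 c () := rfl
    simp only [cycleHomotopy_zero_cons, cycleWeight_cons, map_zero, hpath]
    rw [← map_zsmul (cycleCons 0), ← map_sub]
    congr 1
    simp only [Prod.smul_mk, Prod.mk_sub_mk, smul_zero, add_zero, sub_zero]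
    congr 1
    ext : 1
    exact (add_sub_cancel_right (cycleWeight α β 0 c ()) (α • c ())).symm
  | m + 1, c => by
    obtain ⟨⟨p, c⟩, rfl⟩ := (cycleCons (m + 1)).surjective c
    simp only [cycleHomotopy_cons, cycleWeight_cons, map_neg, cycleWeight_cycleHomotopy,
      pathWeight_pathHomotopy, map_sub, map_add, map_zsmul, cycleWeight_pathClose]
    rw [← map_zsmul (cycleCons (m + 1)), ← map_sub (cycleCons (m + 1)), Prod.smul_mk,
      Prod.mk_sub_mk]
    congr 2
    module

end Weights

/-- The deformation retraction of the chains of a cycle onto the small complex. -/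
def cycleRetract (m : ℕ) :
    BigradedRetract (fun α β => cycleWeight α β (m + 1)) ((cycleDiff (m + 1)).restrictScalars ℤ)
      (fun α β => smallWeight α β m) ((smallDiff m).restrictScalars ℤ) where
  incl := (cycleIncl m).restrictScalars ℤ
  proj := (cycleProj m).restrictScalars ℤ
  homotopy := (cycleHomotopy m).restrictScalars ℤ
  d_incl := cycleDiff_cycleIncl
  proj_d := cycleProj_cycleDiff
  proj_incl := cycleProj_cycleIncl
  incl_proj_add := cycleIncl_cycleProj_add
  weight_incl _ _ := cycleWeight_cycleIncl
  weight_proj _ _ := smallWeight_cycleProj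
  weight_homotopy _ _ := cycleWeight_cycleHomotopy

end Model

namespace OGraph

section ChainOperators

open scoped Finset

variable {G : OGraph} {s : Finset (Fin G.n)} {e f : Fin G.n} {u v : G.V} {T : Multiset G.V}

/-- The component of the spanning subgraph `[G:s]` that contains the vertex `v`. -/
def component (s : Finset (Fin G.n)) (v : G.V) : G.Comp s := Quot.mk _ v

lemma component_surjective (s : Finset (Fin G.n)) : Function.Surjective (G.component s) :=
  Quot.mk_surjective

instance (s : Finset (Fin G.n)) : Finite (G.Comp s) := .of_surjective _ (component_surjective s)

lemma component_eq_of_ends (he : e ∈ s) (hends : G.ends e = s(u, v)) :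
    component s u = component s v :=
  Quot.sound ⟨e, he, hends⟩

lemma component_eq_of_subset {t : Finset (Fin G.n)} (hst : s ⊆ t)
    (h : component s u = component s v) : component t u = component t v :=
  congrArg (qmap fun _ _ ⟨e, he, hends⟩ => ⟨e, hst he, hends⟩ : G.Comp s → G.Comp t) h

open Classical in
/-- The chain `∏_{v ∈ T} x_v` in the summand of the edge set `s`, where `x_v` is the variable of
the component of `v`: the state in which the components of the vertices in `T` are colored `x`,
or `0` if two vertices of `T` lie in the same component. -/
noncomputable def monomial (s : Finset (Fin G.n)) (T : Multiset G.V) : G.EState →₀ ℤ :=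
  if (T.map (component s)).Nodup then .single ⟨s, (· ∈ T.map (component s))⟩ 1 else 0

lemma monomial_of_nodup (h : (T.map (component s)).Nodup) :
    monomial s T = .single ⟨s, (· ∈ T.map (component s))⟩ 1 :=
  if_pos h

lemma monomial_of_not_nodup (h : ¬(T.map (component s)).Nodup) : monomial s T = 0 :=
  if_neg h

lemma monomial_congr {T' : Multiset G.V} (h : T.map (component s) = T'.map (component s)) :
    monomial s T = monomial s T' := by
  unfold monomial
  rw [h]

lemma exists_single_eq_monomial (S : G.EState) :
    ∃ T : Multiset G.V, .single S 1 = monomial S.1 T := by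
  have hcolored := Set.toFinite {K | S.2 K}
  let T := hcolored.toFinset.val.map (Function.surjInv (component_surjective S.1))
  have hT : T.map (component S.1) = hcolored.toFinset.val := by
    simp [T, Multiset.map_map, Function.surjInv_eq]
  refine ⟨T, ?_⟩
  rw [monomial_of_nodup (hT ▸ hcolored.toFinset.nodup), hT]
  simp

lemma chain_hom_ext {M : Type*} [AddCommGroup M] {φ ψ : (G.EState →₀ ℤ) →ₗ[ℤ] M}
    (h : ∀ s T, φ (monomial s T) = ψ (monomial s T)) : φ = ψ := by
  refine Finsupp.lhom_ext' fun S => LinearMap.ext_ring ?_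
  obtain ⟨T, hT⟩ := exists_single_eq_monomial S
  simpa [hT] using h S.1 T

open Classical in
/-- Multiplication by the variable of the component of `v`. -/
noncomputable def vertexMul (v : G.V) : Module.End ℤ (G.EState →₀ ℤ) :=
  Finsupp.linearCombination ℤ fun S =>
    if S.2 (component S.1 v) then 0
    else .single ⟨S.1, fun K => K = component S.1 v ∨ S.2 K⟩ 1

/-- The summand of the differential that adds the edge `e`. -/
noncomputable def edgeMul (e : Fin G.n) : Module.End ℤ (G.EState →₀ ℤ) :=
  Finsupp.linearCombination ℤ fun S => (-1 : ℤ) ^ #{f ∈ S.1 | f < e} • G.addEdge S e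

lemma diff_eq_sum_edgeMul : G.diff = ∑ e, edgeMul e := by
  refine Finsupp.lhom_ext' fun S => LinearMap.ext_ring ?_
  simp [diff, edgeMul, dState]

lemma vertexMul_monomial (v : G.V) (s : Finset (Fin G.n)) (T : Multiset G.V) :
    vertexMul v (monomial s T) = monomial s (v ::ₘ T) := by
  by_cases hT : (T.map (component s)).Nodup
  · by_cases hv : component s v ∈ T.map (component s)
    · rw [monomial_of_nodup hT, monomial_of_not_nodup (by simp_all)]
      simp_all [vertexMul]
    · rw [monomial_of_nodup hT, monomial_of_nodup (by simp_all)]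
      simp_all [vertexMul]
  · rw [monomial_of_not_nodup hT, monomial_of_not_nodup (by simp_all), map_zero]

lemma addEdge_of_nodup (hT : (T.map (component s)).Nodup) (he : e ∉ s) :
    G.addEdge ⟨s, (· ∈ T.map (component s))⟩ e = monomial (insert e s) T := by
  set merge : G.Comp s → G.Comp (insert e s) :=
    qmap fun _ _ huv => huv.elim fun f hf => ⟨f, Finset.mem_insert_of_mem hf.1, hf.2⟩
  have hmap : T.map (component (insert e s)) = (T.map (component s)).map merge := by
    rw [Multiset.map_map]; rfl
  have hmerge : (∃ k₁ k₂, k₁ ≠ k₂ ∧ merge k₁ = merge k₂ ∧ k₁ ∈ T.map (component s) ∧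
      k₂ ∈ T.map (component s)) ↔ ¬(T.map (component (insert e s))).Nodup := by
    rw [hmap, Multiset.nodup_map_iff_inj_on hT]
    push Not
    tauto
  rw [addEdge, if_neg he]
  by_cases h : (T.map (component (insert e s))).Nodup
  · rw [monomial_of_nodup h, hmap]
    refine (if_neg (hmerge.not_left.2 h)).trans ?_
    simp only [Multiset.mem_map (f := merge), and_comm]
    rfl
  · exact (if_pos (hmerge.2 h)).trans (monomial_of_not_nodup h).symm

lemma edgeMul_monomial_of_mem (he : e ∈ s) (T : Multiset G.V) : edgeMul e (monomial s T) = 0 := by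
  by_cases hT : (T.map (component s)).Nodup
  · simp [monomial_of_nodup hT, edgeMul, addEdge, he]
  · rw [monomial_of_not_nodup hT, map_zero]

lemma edgeMul_monomial_of_notMem (he : e ∉ s) (T : Multiset G.V) :
    edgeMul e (monomial s T) = (-1 : ℤ) ^ #{f ∈ s | f < e} • monomial (insert e s) T := by
  by_cases hT : (T.map (component s)).Nodup
  · rw [← addEdge_of_nodup hT he]
    simp [monomial_of_nodup hT, edgeMul]
  · have hT' : ¬(T.map (component (insert e s))).Nodup := fun h => hT <|
      (Multiset.nodup_map_iff_inj_on (h.of_map _)).2 fun u hu v hv huv =>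
        Multiset.inj_on_of_nodup_map h u hu v hv
          (component_eq_of_subset (Finset.subset_insert e s) huv)
    rw [monomial_of_not_nodup hT, monomial_of_not_nodup hT', map_zero, smul_zero]

lemma vertexMul_vertexMul_self (v : G.V) (c : G.EState →₀ ℤ) :
    vertexMul v (vertexMul v c) = 0 := by
  refine LinearMap.congr_fun (chain_hom_ext (φ := vertexMul v * vertexMul v) (ψ := 0)
    fun s T => ?_) c
  rw [Module.End.mul_apply, vertexMul_monomial, vertexMul_monomial, monomial_of_not_nodup (by simp)]
  rfl

lemma vertexMul_comm (u v : G.V) (c : G.EState →₀ ℤ) :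
    vertexMul u (vertexMul v c) = vertexMul v (vertexMul u c) := by
  refine LinearMap.congr_fun (chain_hom_ext (φ := vertexMul u * vertexMul v)
    (ψ := vertexMul v * vertexMul u) fun s T => ?_) c
  simp only [Module.End.mul_apply, vertexMul_monomial, Multiset.cons_swap]

lemma edgeMul_vertexMul (e : Fin G.n) (v : G.V) (c : G.EState →₀ ℤ) :
    edgeMul e (vertexMul v c) = vertexMul v (edgeMul e c) := by
  refine LinearMap.congr_fun (chain_hom_ext (φ := edgeMul e * vertexMul v)
    (ψ := vertexMul v * edgeMul e) fun s T => ?_) c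
  by_cases he : e ∈ s
  · simp [vertexMul_monomial, edgeMul_monomial_of_mem he]
  · simp [vertexMul_monomial, edgeMul_monomial_of_notMem he]

lemma edgeMul_vertexMul_eq_of_ends (h : G.ends e = s(u, v)) (c : G.EState →₀ ℤ) :
    edgeMul e (vertexMul u c) = edgeMul e (vertexMul v c) := by
  refine LinearMap.congr_fun (chain_hom_ext (φ := edgeMul e * vertexMul u)
    (ψ := edgeMul e * vertexMul v) fun s T => ?_) c
  by_cases he : e ∈ s
  · simp [vertexMul_monomial, edgeMul_monomial_of_mem he]
  · have huv : monomial (insert e s) (u ::ₘ T) = monomial (insert e s) (v ::ₘ T) :=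
      monomial_congr <| by
        simp only [Multiset.map_cons, component_eq_of_ends (Finset.mem_insert_self e s) h]
    simp only [Module.End.mul_apply, vertexMul_monomial, edgeMul_monomial_of_notMem he, huv]

lemma edgeMul_edgeMul_self (e : Fin G.n) (c : G.EState →₀ ℤ) : edgeMul e (edgeMul e c) = 0 := by
  refine LinearMap.congr_fun (chain_hom_ext (φ := edgeMul e * edgeMul e) (ψ := 0)
    fun s T => ?_) c
  by_cases he : e ∈ s
  · simp [edgeMul_monomial_of_mem he]
  · simp [edgeMul_monomial_of_notMem he, edgeMul_monomial_of_mem (Finset.mem_insert_self e s)]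

lemma edgeMul_edgeMul_of_lt (h : e < f) (c : G.EState →₀ ℤ) :
    edgeMul e (edgeMul f c) = -edgeMul f (edgeMul e c) := by
  refine LinearMap.congr_fun (chain_hom_ext (φ := edgeMul e * edgeMul f)
    (ψ := -(edgeMul f * edgeMul e)) fun s T => ?_) c
  by_cases he : e ∈ s
  · by_cases hf : f ∈ s
    · simp [edgeMul_monomial_of_mem, he, hf]
    · simp [edgeMul_monomial_of_mem, edgeMul_monomial_of_notMem, he, hf]
  by_cases hf : f ∈ s
  · simp [edgeMul_monomial_of_mem, edgeMul_monomial_of_notMem, he, hf]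
  have hcard : #{g ∈ insert e s | g < f} = #{g ∈ s | g < f} + 1 := by
    rw [Finset.filter_insert, if_pos h, Finset.card_insert_of_notMem (by simp [he])]
  have hcard' : #{g ∈ insert f s | g < e} = #{g ∈ s | g < e} := by
    rw [Finset.filter_insert, if_neg h.not_gt]
  simp [edgeMul_monomial_of_notMem, he, hf, h.ne, h.ne', hcard, hcard', smul_smul,
    Finset.insert_comm e f, pow_succ, mul_comm]

lemma edgeMul_edgeMul (e f : Fin G.n) (c : G.EState →₀ ℤ) :
    edgeMul e (edgeMul f c) = -edgeMul f (edgeMul e c) := by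
  rcases lt_trichotomy e f with h | rfl | h
  · exact edgeMul_edgeMul_of_lt h c
  · simp [edgeMul_edgeMul_self]
  · rw [edgeMul_edgeMul_of_lt h, neg_neg]

lemma submodule_eq_top_of_one_mem {N : Submodule ℤ (G.EState →₀ ℤ)} (hone : monomial ∅ 0 ∈ N)
    (hedge : ∀ e, ∀ c ∈ N, edgeMul e c ∈ N) (hvertex : ∀ v, ∀ c ∈ N, vertexMul v c ∈ N) :
    N = ⊤ := by
  have hmonomial (s : Finset (Fin G.n)) (T : Multiset G.V) : monomial s T ∈ N := by
    induction T using Multiset.induction with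
    | empty =>
      induction s using Finset.induction with
      | empty => exact hone
      | insert e s he ih =>
        have := hedge e _ ih
        rwa [edgeMul_monomial_of_notMem he, Submodule.smul_mem_iff_of_isUnit _
          ((isUnit_neg_one (α := ℤ)).pow _)] at this
    | cons v T ih => exact vertexMul_monomial v s T ▸ hvertex v _ ih
  refine eq_top_iff.2 fun c _ => ?_
  induction c using Finsupp.induction_linear with
  | zero => exact N.zero_mem
  | add c c' hc hc' => exact N.add_mem (hc trivial) (hc' trivial)
  | single S a =>
    obtain ⟨T, hT⟩ := exists_single_eq_monomial S
    rw [← mul_one a, ← smul_eq_mul, ← Finsupp.smul_single, hT]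
    exact N.smul_mem a (hmonomial S.1 T)

end ChainOperators

section Weight

open scoped Finset

variable {G : OGraph}

/-- The weight operators of the bigrading of the chains by the number of edges and the number of
components colored `x`. -/
noncomputable def weight (α β : ℤ) : Module.End ℤ (G.EState →₀ ℤ) :=
  Finsupp.lsum ℤ fun S => (α * #S.1 + β * G.jdeg S) • Finsupp.lsingle S

lemma weight_single (α β a : ℤ) (S : G.EState) :
    weight α β (.single S a) = (α * #S.1 + β * G.jdeg S) • .single S a := by
  simp [weight]

lemma weight_apply (α β : ℤ) (c : G.EState →₀ ℤ) (S : G.EState) :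
    weight α β c S = (α * #S.1 + β * G.jdeg S) * c S := by
  classical
  induction c using Finsupp.induction_linear with
  | zero => simp
  | add c c' hc hc' => simp [hc, hc', mul_add]
  | single S' a =>
    rw [weight_single, Finsupp.smul_apply, smul_eq_mul]
    by_cases h : S' = S
    · rw [h]
    · simp [h]

lemma mem_bidegree_weight {i j : ℤ} {c : G.EState →₀ ℤ} :
    c ∈ bidegree weight i j ↔ ∀ S, c S ≠ 0 → #S.1 = i ∧ G.jdeg S = j := by
  simp only [mem_bidegree, DFunLike.ext_iff, weight_apply, Finsupp.smul_apply, smul_eq_mul,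
    mul_eq_mul_right_iff]
  constructor
  · exact fun h S hS => ⟨by simpa [hS] using h 1 0 S, by simpa [hS] using h 0 1 S⟩
  · intro h α β S
    by_cases hS : c S = 0
    · exact .inr hS
    · exact .inl (by rw [(h S hS).1, (h S hS).2])

lemma mem_Cmod_iff {i j : ℕ} {c : G.EState →₀ ℤ} :
    c ∈ G.Cmod i j ↔ c ∈ bidegree weight (i : ℤ) j := by
  simp [Cmod, mem_bidegree_weight, Finsupp.mem_supported, Set.subset_def]

lemma mem_Bmod_iff {i j : ℕ} {c : G.EState →₀ ℤ} :
    c ∈ G.Bmod i j ↔ ∃ h ∈ bidegree weight ((i : ℤ) - 1) j, G.diff h = c := by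
  cases i with
  | zero =>
    have hzero (h : G.EState →₀ ℤ) : h ∈ bidegree weight (((0 : ℕ) : ℤ) - 1) j ↔ h = 0 := by
      rw [mem_bidegree_weight]
      refine ⟨fun hh => Finsupp.ext fun S => by_contra fun hS => ?_, by rintro rfl; simp⟩
      have := (hh S hS).1
      omega
    simp only [Bmod, Submodule.mem_bot, hzero, exists_eq_left, map_zero, eq_comm]
  | succ i => simp [Bmod, mem_Cmod_iff]

lemma weight_monomial (α β : ℤ) (s : Finset (Fin G.n)) (T : Multiset G.V) :
    weight α β (monomial s T) = (α * #s + β * T.card) • monomial s T := by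
  by_cases hT : (T.map (component s)).Nodup
  · have hjdeg : G.jdeg ⟨s, (· ∈ T.map (component s))⟩ = T.card := by
      classical
      rw [← Multiset.card_map (component s), ← Multiset.toFinset_card_of_nodup hT]
      exact Nat.subtype_card _ fun K => Multiset.mem_toFinset
    rw [monomial_of_nodup hT, weight_single, hjdeg]
  · rw [monomial_of_not_nodup hT, map_zero, smul_zero]

lemma weight_edgeMul (α β : ℤ) (e : Fin G.n) (c : G.EState →₀ ℤ) :
    weight α β (edgeMul e c) = edgeMul e (weight α β c) + α • edgeMul e c := by
  refine LinearMap.congr_fun (chain_hom_ext (φ := weight α β * edgeMul e)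
    (ψ := edgeMul e * weight α β + α • edgeMul e) fun s T => ?_) c
  by_cases he : e ∈ s
  · simp [weight_monomial, edgeMul_monomial_of_mem he]
  · simp only [Module.End.mul_apply, LinearMap.add_apply, LinearMap.smul_apply, weight_monomial,
      edgeMul_monomial_of_notMem he, map_smul, Finset.card_insert_of_notMem he]
    module

lemma weight_vertexMul (α β : ℤ) (v : G.V) (c : G.EState →₀ ℤ) :
    weight α β (vertexMul v c) = vertexMul v (weight α β c) + β • vertexMul v c := by
  refine LinearMap.congr_fun (chain_hom_ext (φ := weight α β * vertexMul v)
    (ψ := vertexMul v * weight α β + β • vertexMul v) fun s T => ?_) c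
  simp only [Module.End.mul_apply, LinearMap.add_apply, LinearMap.smul_apply, weight_monomial,
    vertexMul_monomial, map_smul, Multiset.card_cons]
  module

lemma nonempty_Hmod_equiv {N B : Type*} [AddCommGroup N] [AddCommGroup B]
    {w : ℤ → ℤ → Module.End ℤ N} {d : Module.End ℤ N}
    (r : BigradedRetract weight G.diff w d) {i j : ℕ} (f : N →ₗ[ℤ] B)
    (hsurj : ∀ b, ∃ x ∈ bidegree w (i : ℤ) j, d x = 0 ∧ f x = b)
    (hker : ∀ x ∈ bidegree w (i : ℤ) j, d x = 0 →
      (f x = 0 ↔ ∃ h ∈ bidegree w ((i : ℤ) - 1) j, d h = x)) :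
    Nonempty (G.Hmod i j ≃+ B) := by
  let F : (G.Zmod i j).toAddSubgroup →+ B :=
    (f ∘ₗ r.proj).toAddMonoidHom.comp (G.Zmod i j).toAddSubgroup.subtype
  have hF : Function.Surjective F := fun b => by
    obtain ⟨x, hx, hdx, rfl⟩ := hsurj b
    refine ⟨⟨r.incl x, by simp [r.d_incl, hdx], mem_Cmod_iff.2 (map_mem_bidegree r.weight_incl hx)⟩,
      congrArg f (r.proj_incl x)⟩
  have hFker : F.ker = AddSubgroup.comap (G.Zmod i j).toAddSubgroup.subtype
      (G.Bmod i j).toAddSubgroup := by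
    ext ⟨z, hdz, hz⟩
    have hz := mem_Cmod_iff.1 hz
    have hdz : G.diff z = 0 := hdz
    have hproj := hker (r.proj z) (map_mem_bidegree r.weight_proj hz) (by
      rw [← r.proj_d, hdz, map_zero])
    exact hproj.trans ((r.exists_d_eq_iff hz hdz).symm.trans mem_Bmod_iff.symm)
  exact ⟨(QuotientAddGroup.quotientAddEquivOfEq hFker.symm).trans
    (QuotientAddGroup.quotientKerEquivOfSurjective F hF)⟩

end Weight

section Counting

open scoped Finset

variable {G : OGraph}

lemma ncomp_le_ncomp_insert_add_one (e : Fin G.n) (s : Finset (Fin G.n)) :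
    G.ncomp s ≤ G.ncomp (insert e s) + 1 := by
  classical
  obtain ⟨u, v, he⟩ : ∃ u v, G.ends e = s(u, v) := Sym2.exists.1 ⟨_, rfl⟩
  let split : G.Comp (insert e s) → G.Comp s :=
    Quot.lift (fun w => if component s w = component s u then component s v else component s w) (by
      rintro a b ⟨f, hf, hab⟩
      rcases Finset.mem_insert.1 hf with rfl | hf
      · rcases Sym2.eq_iff.1 (he.symm.trans hab) with ⟨rfl, rfl⟩ | ⟨rfl, rfl⟩ <;> simp +contextual
      · simp only [component_eq_of_ends hf hab])
  have hsurj : Function.Surjective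
      (fun K : Option (G.Comp (insert e s)) => K.elim (component s u) split) := by
    intro K
    obtain ⟨w, rfl⟩ := component_surjective s K
    by_cases hw : component s w = component s u
    · exact ⟨none, hw.symm⟩
    · exact ⟨some (component _ w), if_neg hw⟩
  calc G.ncomp s ≤ Nat.card (Option (G.Comp (insert e s))) := Nat.card_le_card_of_surjective _ hsurj
    _ = G.ncomp (insert e s) + 1 := Finite.card_option

lemma card_le_ncomp_add_card (s : Finset (Fin G.n)) : Fintype.card G.V ≤ G.ncomp s + #s := by
  induction s using Finset.induction with
  | empty =>
    have hinj : Function.Injective (G.component ∅) := fun u v h =>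
      congrArg (Quot.lift id (by rintro _ _ ⟨e, he, -⟩; simp at he)) h
    rw [← Nat.card_eq_fintype_card]
    exact Nat.card_le_card_of_injective _ hinj
  | insert e s he ih =>
    rw [Finset.card_insert_of_notMem he]
    have := ncomp_le_ncomp_insert_add_one e s
    omega

lemma card_EState : Nat.card G.EState = ∑ s, 2 ^ G.ncomp s := by
  simp [EState, Nat.card_sigma, Nat.card_fun, ncomp]

end Counting

/-- An infinite walk in a multigraph. Its first `k` edges realise the path with `k` edges, and a
cycle if they lead back to the initial vertex. -/
structure Walk (G : OGraph) where
  vertex : ℕ → G.V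
  edge : ℕ → Fin G.n
  ends_edge (i : ℕ) : G.ends (edge i) = s(vertex i, vertex (i + 1))

namespace Walk

open scoped DualNumber

variable {G : OGraph}

/-- The walk without its first edge. -/
def tail (W : G.Walk) : G.Walk where
  vertex i := W.vertex (i + 1)
  edge i := W.edge (i + 1)
  ends_edge i := W.ends_edge (i + 1)

lemma tail_vertex (W : G.Walk) (i : ℕ) : W.tail.vertex i = W.vertex (i + 1) := rfl

lemma tail_edge (W : G.Walk) (i : ℕ) : W.tail.edge i = W.edge (i + 1) := rfl

/-- The part of the differential that adds one of the first `k` edges of the walk. -/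
noncomputable def diff (W : G.Walk) (k : ℕ) : Module.End ℤ (G.EState →₀ ℤ) :=
  ∑ i ∈ Finset.range k, edgeMul (W.edge i)

lemma diff_succ (W : G.Walk) (k : ℕ) : W.diff (k + 1) = edgeMul (W.edge 0) + W.tail.diff k := by
  rw [diff, Finset.sum_range_succ', add_comm]
  rfl

lemma diff_edgeMul (W : G.Walk) (k : ℕ) (e : Fin G.n) (c : G.EState →₀ ℤ) :
    W.diff k (edgeMul e c) = -edgeMul e (W.diff k c) := by
  simp only [diff, LinearMap.sum_apply, map_sum, edgeMul_edgeMul _ e, Finset.sum_neg_distrib]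

lemma diff_vertexMul (W : G.Walk) (k : ℕ) (v : G.V) (c : G.EState →₀ ℤ) :
    W.diff k (vertexMul v c) = vertexMul v (W.diff k c) := by
  simp only [diff, LinearMap.sum_apply, map_sum, edgeMul_vertexMul]

/-- The inclusion of `ℤ[x]/(x²)` into the chains without edges, with `x` acting at the vertex
`v`. -/
noncomputable def vertexChain (v : G.V) : ℤ[ε] →ₗ[ℤ] G.EState →₀ ℤ :=
  (LinearMap.toSpanSingleton ℤ _ (monomial ∅ 0)) ∘ₗ TrivSqZeroExt.fstHom ℤ ℤ ℤ +
    (LinearMap.toSpanSingleton ℤ _ (monomial ∅ {v})) ∘ₗ TrivSqZeroExt.sndHom ℤ ℤ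

lemma vertexChain_apply (v : G.V) (a : ℤ[ε]) :
    vertexChain v a = a.fst • monomial ∅ 0 + a.snd • monomial ∅ {v} := rfl

lemma vertexMul_vertexChain (v : G.V) (a : ℤ[ε]) :
    vertexMul v (vertexChain v a) = vertexChain v (ε * a) := by
  have hsq : monomial ∅ (v ::ₘ {v}) = 0 := monomial_of_not_nodup (by simp)
  simp [vertexChain_apply, vertexMul_monomial, hsq]

lemma weight_vertexChain (α β : ℤ) (v : G.V) (a : ℤ[ε]) :
    weight α β (vertexChain v a) = vertexChain v (β • euler a) := by
  simp [vertexChain_apply, weight_monomial, euler, smul_smul, mul_comm]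

/-- The chain of `G` that realises a chain on the path formed by the first `k` edges of a walk. -/
noncomputable def pathRealize : (k : ℕ) → G.Walk → PathChain k →ₗ[ℤ] G.EState →₀ ℤ
  | 0, W => vertexChain (W.vertex 0) ∘ₗ .proj ()
  | k + 1, W =>
      edgeMul (W.edge 0) ∘ₗ pathRealize k W.tail ∘ₗ (edgePart k).restrictScalars ℤ +
      pathRealize k W.tail ∘ₗ (onePart k).restrictScalars ℤ +
      vertexMul (W.vertex 0) ∘ₗ pathRealize k W.tail ∘ₗ (xPart k).restrictScalars ℤ

/-- The chain of `G` that realises a chain on the cycle formed by the first `k` edges of a closed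
walk. In the recursion `W.tail` is closed only after contracting the first edge of `W`. -/
noncomputable def cycleRealize : (k : ℕ) → G.Walk → CycleChain k →ₗ[ℤ] G.EState →₀ ℤ
  | 0, W => vertexChain (W.vertex 0) ∘ₗ .proj ()
  | k + 1, W =>
      pathRealize k W.tail ∘ₗ (pathPart k).restrictScalars ℤ +
      edgeMul (W.edge 0) ∘ₗ cycleRealize k W.tail ∘ₗ (cyclePart k).restrictScalars ℤ

section Recursion

variable {k : ℕ} (W : G.Walk) (p q r : PathChain k) (c : CycleChain k)

lemma pathRealize_zero (f : PathChain 0) :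
    pathRealize 0 W f = vertexChain (W.vertex 0) (f ()) := rfl

lemma pathRealize_cons : pathRealize (k + 1) W (pathCons k (p, q, r)) =
    edgeMul (W.edge 0) (pathRealize k W.tail p) + pathRealize k W.tail q +
      vertexMul (W.vertex 0) (pathRealize k W.tail r) := rfl

lemma cycleRealize_cons : cycleRealize (k + 1) W (cycleCons k (p, c)) =
    pathRealize k W.tail p + edgeMul (W.edge 0) (cycleRealize k W.tail c) := rfl

end Recursion

lemma edgeMul_vertexMul_tail (W : G.Walk) (c : G.EState →₀ ℤ) :
    edgeMul (W.edge 0) (vertexMul (W.tail.vertex 0) c) =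
      vertexMul (W.vertex 0) (edgeMul (W.edge 0) c) := by
  rw [← edgeMul_vertexMul, edgeMul_vertexMul_eq_of_ends (W.ends_edge 0), tail_vertex]

lemma vertexMul_pathRealize : ∀ {k : ℕ} (W : G.Walk) (f : PathChain k),
    vertexMul (W.vertex 0) (pathRealize k W f) = pathRealize k W (pathHeadMul k f)
  | 0, W, f => vertexMul_vertexChain _ _
  | k + 1, W, f => by
    obtain ⟨⟨p, q, r⟩, rfl⟩ := (pathCons k).surjective f
    rw [pathHeadMul_cons, pathRealize_cons, pathRealize_cons, ← vertexMul_pathRealize W.tail,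
      edgeMul_vertexMul_tail, map_add, map_add, vertexMul_vertexMul_self, map_zero,
      add_zero, add_zero]

lemma edgeMul_pathRealize_pathHeadMul {k : ℕ} (W : G.Walk) (f : PathChain k) :
    edgeMul (W.edge 0) (pathRealize k W.tail (pathHeadMul k f)) =
      vertexMul (W.vertex 0) (edgeMul (W.edge 0) (pathRealize k W.tail f)) := by
  rw [← vertexMul_pathRealize, edgeMul_vertexMul_tail]

lemma vertexMul_last_pathRealize : ∀ {k : ℕ} (W : G.Walk) (f : PathChain k),
    vertexMul (W.vertex k) (pathRealize k W f) = pathRealize k W ((ε : ℤ[ε]) • f)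
  | 0, W, f => vertexMul_vertexChain _ _
  | k + 1, W, f => by
    obtain ⟨⟨p, q, r⟩, rfl⟩ := (pathCons k).surjective f
    have ih := vertexMul_last_pathRealize (k := k) W.tail
    rw [← map_smul (pathCons k), Prod.smul_mk, Prod.smul_mk, pathRealize_cons, pathRealize_cons,
      ← ih, ← ih, ← ih, edgeMul_vertexMul, vertexMul_comm (W.vertex 0), map_add, map_add,
      tail_vertex]

lemma diff_pathRealize : ∀ {k : ℕ} (W : G.Walk) (f : PathChain k),
    W.diff k (pathRealize k W f) = pathRealize k W (pathDiff k f)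
  | 0, W, f => by simp [diff, pathDiff_zero]
  | k + 1, W, f => by
    obtain ⟨⟨p, q, r⟩, rfl⟩ := (pathCons k).surjective f
    have ih := diff_pathRealize (k := k) W.tail
    simp only [pathDiff_cons, pathRealize_cons, map_sub, map_add, diff_succ, LinearMap.add_apply,
      diff_edgeMul, diff_vertexMul, ih, edgeMul_edgeMul_self, edgeMul_vertexMul,
      edgeMul_pathRealize_pathHeadMul]
    abel

lemma weight_pathRealize (α β : ℤ) : ∀ {k : ℕ} (W : G.Walk) (f : PathChain k),
    weight α β (pathRealize k W f) = pathRealize k W (pathWeight α β k f)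
  | 0, W, f => weight_vertexChain _ _ _ _
  | k + 1, W, f => by
    obtain ⟨⟨p, q, r⟩, rfl⟩ := (pathCons k).surjective f
    simp only [pathWeight_cons, pathRealize_cons, map_add, map_zsmul, weight_edgeMul,
      weight_vertexMul, weight_pathRealize]

lemma weight_cycleRealize (α β : ℤ) : ∀ {k : ℕ} (W : G.Walk) (c : CycleChain k),
    weight α β (cycleRealize k W c) = cycleRealize k W (cycleWeight α β k c)
  | 0, W, c => weight_vertexChain _ _ _ _
  | k + 1, W, c => by
    obtain ⟨⟨p, c⟩, rfl⟩ := (cycleCons k).surjective c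
    simp only [cycleWeight_cons, cycleRealize_cons, map_add, map_zsmul, weight_edgeMul,
      weight_pathRealize, weight_cycleRealize]

/-- The operator `P` identifies the ends of the path formed by the first `k` edges of a walk. In
the recursion along a closed walk, `P` adds the edges already passed. -/
def JoinsEnds (P : Module.End ℤ (G.EState →₀ ℤ)) (k : ℕ) (W : G.Walk) : Prop :=
  ∀ c, P (vertexMul (W.vertex 0) c) = P (vertexMul (W.vertex k) c)

lemma JoinsEnds.mul_edgeMul {P : Module.End ℤ (G.EState →₀ ℤ)} {k : ℕ} {W : G.Walk}
    (hP : JoinsEnds P (k + 1) W) : JoinsEnds (P * edgeMul (W.edge 0)) k W.tail := fun c =>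
  calc P (edgeMul (W.edge 0) (vertexMul (W.tail.vertex 0) c))
      = P (vertexMul (W.vertex 0) (edgeMul (W.edge 0) c)) := by rw [edgeMul_vertexMul_tail]
    _ = P (vertexMul (W.vertex (k + 1)) (edgeMul (W.edge 0) c)) := hP _
    _ = P (edgeMul (W.edge 0) (vertexMul (W.tail.vertex k) c)) := by
      rw [edgeMul_vertexMul, tail_vertex]

lemma JoinsEnds.apply_pathRealize : ∀ {k : ℕ} {W : G.Walk} {P : Module.End ℤ (G.EState →₀ ℤ)}
    (_ : JoinsEnds P k W) (f : PathChain k),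
    P (pathRealize k W f) = P (cycleRealize k W (pathClose k f))
  | 0, _, _, _, _ => rfl
  | k + 1, W, P, hP, f => by
    obtain ⟨⟨p, q, r⟩, rfl⟩ := (pathCons k).surjective f
    have ih : P (edgeMul (W.edge 0) (pathRealize k W.tail p)) =
        P (edgeMul (W.edge 0) (cycleRealize k W.tail (pathClose k p))) :=
      hP.mul_edgeMul.apply_pathRealize p
    have hlast : P (vertexMul (W.vertex 0) (pathRealize k W.tail r)) =
        P (pathRealize k W.tail ((ε : ℤ[ε]) • r)) :=
      (hP _).trans (congrArg P (vertexMul_last_pathRealize W.tail r))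
    simp only [pathClose_cons, pathRealize_cons, cycleRealize_cons, map_add, ih, hlast]
    abel

lemma JoinsEnds.apply_diff_cycleRealize : ∀ {k : ℕ} {W : G.Walk}
    {P : Module.End ℤ (G.EState →₀ ℤ)} (_ : JoinsEnds P k W) (c : CycleChain k),
    P (W.diff k (cycleRealize k W c)) = P (cycleRealize k W (cycleDiff k c))
  | 0, W, P, _, c => by simp [diff, cycleDiff_zero]
  | k + 1, W, P, hP, c => by
    obtain ⟨⟨p, c⟩, rfl⟩ := (cycleCons k).surjective c
    have hclose : P (edgeMul (W.edge 0) (pathRealize k W.tail p)) =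
        P (edgeMul (W.edge 0) (cycleRealize k W.tail (pathClose k p))) :=
      hP.mul_edgeMul.apply_pathRealize p
    have ih : P (edgeMul (W.edge 0) (W.tail.diff k (cycleRealize k W.tail c))) =
        P (edgeMul (W.edge 0) (cycleRealize k W.tail (cycleDiff k c))) :=
      hP.mul_edgeMul.apply_diff_cycleRealize c
    simp only [cycleDiff_cons, cycleRealize_cons, diff_succ, LinearMap.add_apply, map_add,
      map_sub, map_neg, map_zero, edgeMul_edgeMul_self, diff_edgeMul, diff_pathRealize, hclose, ih]
    abel

lemma pathRealize_eq_cycleRealize {k : ℕ} {W : G.Walk} (hW : W.vertex k = W.vertex 0)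
    (f : PathChain k) :
    pathRealize k W f = cycleRealize k W (pathClose k f) :=
  JoinsEnds.apply_pathRealize (P := 1) (fun c => by rw [hW]) f

lemma diff_cycleRealize {k : ℕ} {W : G.Walk} (hW : W.vertex k = W.vertex 0) (c : CycleChain k) :
    W.diff k (cycleRealize k W c) = cycleRealize k W (cycleDiff k c) :=
  JoinsEnds.apply_diff_cycleRealize (P := 1) (fun c => by rw [hW]) c

lemma edgeMul_pathRealize_mem_range : ∀ {k i : ℕ} (_ : i < k) (W : G.Walk) (f : PathChain k),
    edgeMul (W.edge i) (pathRealize k W f) ∈ (pathRealize k W).range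
  | k + 1, 0, _, W, f => by
    obtain ⟨⟨p, q, r⟩, rfl⟩ := (pathCons k).surjective f
    refine ⟨pathCons k (q + pathHeadMul k r, 0, 0), ?_⟩
    simp [pathRealize_cons, edgeMul_edgeMul_self, edgeMul_vertexMul,
      edgeMul_pathRealize_pathHeadMul]
  | k + 1, i + 1, hi, W, f => by
    obtain ⟨⟨p, q, r⟩, rfl⟩ := (pathCons k).surjective f
    have ih := edgeMul_pathRealize_mem_range (Nat.lt_of_succ_lt_succ hi) W.tail
    obtain ⟨p', hp⟩ := ih p
    obtain ⟨q', hq⟩ := ih q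
    obtain ⟨r', hr⟩ := ih r
    refine ⟨pathCons k (-p', q', r'), ?_⟩
    rw [pathRealize_cons, pathRealize_cons, map_neg, hp, hq, hr, map_neg,
      edgeMul_edgeMul (W.edge 0), neg_neg, map_add, map_add, edgeMul_vertexMul, tail_edge]

lemma vertexMul_pathRealize_mem_range : ∀ {k i : ℕ} (_ : i ≤ k) (W : G.Walk) (f : PathChain k),
    vertexMul (W.vertex i) (pathRealize k W f) ∈ (pathRealize k W).range
  | _, 0, _, W, f => ⟨_, (vertexMul_pathRealize W f).symm⟩
  | k + 1, i + 1, hi, W, f => by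
    obtain ⟨⟨p, q, r⟩, rfl⟩ := (pathCons k).surjective f
    have ih := vertexMul_pathRealize_mem_range (Nat.le_of_succ_le_succ hi) W.tail
    obtain ⟨p', hp⟩ := ih p
    obtain ⟨q', hq⟩ := ih q
    obtain ⟨r', hr⟩ := ih r
    refine ⟨pathCons k (p', q', r'), ?_⟩
    rw [pathRealize_cons, pathRealize_cons, hp, hq, hr, edgeMul_vertexMul,
      vertexMul_comm (W.vertex 0), map_add, map_add, tail_vertex]

lemma one_mem_range_pathRealize : ∀ (k : ℕ) (W : G.Walk),
    monomial ∅ 0 ∈ (pathRealize k W).range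
  | 0, W => ⟨fun _ => 1, by simp [pathRealize_zero, vertexChain_apply]⟩
  | k + 1, W => by
    obtain ⟨f, hf⟩ := one_mem_range_pathRealize k W.tail
    exact ⟨pathCons k (0, f, 0), by simp [pathRealize_cons, hf]⟩

lemma pathRealize_surjective {k : ℕ} {W : G.Walk} (hedge : ∀ e, ∃ i < k, W.edge i = e)
    (hvertex : ∀ v, ∃ i ≤ k, W.vertex i = v) : Function.Surjective (pathRealize k W) := by
  refine LinearMap.range_eq_top.1 <| submodule_eq_top_of_one_mem (one_mem_range_pathRealize k W)
    (fun e => ?_) fun v => ?_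
  · obtain ⟨i, hi, rfl⟩ := hedge e
    rintro _ ⟨f, rfl⟩
    exact edgeMul_pathRealize_mem_range hi W f
  · obtain ⟨i, hi, rfl⟩ := hvertex v
    rintro _ ⟨f, rfl⟩
    exact vertexMul_pathRealize_mem_range hi W f

lemma cycleRealize_surjective {k : ℕ} {W : G.Walk} (hW : W.vertex k = W.vertex 0)
    (hedge : ∀ e, ∃ i < k, W.edge i = e) (hvertex : ∀ v, ∃ i ≤ k, W.vertex i = v) :
    Function.Surjective (cycleRealize k W) := fun c => by
  obtain ⟨f, rfl⟩ := pathRealize_surjective hedge hvertex c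
  exact ⟨pathClose k f, (pathRealize_eq_cycleRealize hW f).symm⟩

end Walk

end OGraph

section Rank

open scoped DualNumber

instance instFinitePathWord : (k : ℕ) → Finite (PathWord k)
  | 0 => inferInstanceAs (Finite Unit)
  | k + 1 => by
    have := instFinitePathWord k
    exact inferInstanceAs (Finite (PathWord k ⊕ PathWord k ⊕ PathWord k))

instance instFiniteCycleWord : (k : ℕ) → Finite (CycleWord k)
  | 0 => inferInstanceAs (Finite Unit)
  | k + 1 => by
    have := instFiniteCycleWord k
    exact inferInstanceAs (Finite (PathWord k ⊕ CycleWord k))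

lemma card_pathWord : ∀ k : ℕ, Nat.card (PathWord k) = 3 ^ k
  | 0 => Nat.card_unique (α := Unit)
  | k + 1 => by
    have hcard : Nat.card (PathWord (k + 1)) = 3 ^ k + (3 ^ k + 3 ^ k) := by
      rw [← card_pathWord k, ← Nat.card_sum, ← Nat.card_sum]
      rfl
    omega

lemma two_mul_card_cycleWord : ∀ k : ℕ, 2 * Nat.card (CycleWord k) = 3 ^ k + 1
  | 0 => congrArg (2 * ·) (Nat.card_unique (α := Unit))
  | k + 1 => by
    have hcard : Nat.card (CycleWord (k + 1)) = 3 ^ k + Nat.card (CycleWord k) := by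
      rw [← card_pathWord k, ← Nat.card_sum]
      rfl
    have := two_mul_card_cycleWord k
    omega

instance : Module.Free ℤ ℤ[ε] := inferInstanceAs (Module.Free ℤ (ℤ × ℤ))

instance : Module.Finite ℤ ℤ[ε] := inferInstanceAs (Module.Finite ℤ (ℤ × ℤ))

lemma finrank_cycleChain (k : ℕ) : Module.finrank ℤ (CycleChain k) = 3 ^ k + 1 := by
  have := Fintype.ofFinite (CycleWord k)
  have hfinrank : Module.finrank ℤ ℤ[ε] = 2 := by
    change Module.finrank ℤ (ℤ × ℤ) = 2
    rw [Module.finrank_prod, Module.finrank_self]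
  rw [Module.finrank_pi_fintype]
  simp [hfinrank, ← two_mul_card_cycleWord, mul_comm]

lemma injective_of_surjective_of_finrank_le {R M N : Type*} [CommRing R] [IsDomain R]
    [IsNoetherianRing R] [AddCommGroup M] [Module R M] [Module.Finite R M]
    [Module.IsTorsionFree R M] [AddCommGroup N] [Module R N] {f : M →ₗ[R] N}
    (hf : Function.Surjective f) (hrank : Module.finrank R M ≤ Module.finrank R N) :
    Function.Injective f := by
  have hadd := Submodule.finrank_quotient_add_finrank f.ker
  rw [(f.quotKerEquivOfSurjective hf).finrank_eq] at hadd
  exact LinearMap.ker_eq_bot.1 (Submodule.finrank_eq_zero.1 (by omega))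

end Rank

namespace OGraph

open scoped Finset

lemma three_pow_lt_card_EState {G : OGraph} [Nonempty G.V] (h : G.n ≤ Fintype.card G.V) :
    3 ^ G.n < Nat.card G.EState := by
  have hncomp (s : Finset (Fin G.n)) : G.n - #s ≤ G.ncomp s := by
    have := card_le_ncomp_add_card s
    omega
  have huniv : 0 < G.ncomp Finset.univ :=
    Nat.card_pos_iff.2 ⟨.map (component _) inferInstance, inferInstance⟩
  calc 3 ^ G.n = ∑ s : Finset (Fin G.n), 1 ^ #s * 2 ^ (G.n - #s) := by
        have := Fintype.sum_pow_mul_eq_add_pow (Fin G.n) 1 2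
        rw [Fintype.card_fin] at this
        exact this.symm
    _ < ∑ s, 2 ^ G.ncomp s := by
      simp only [one_pow, one_mul]
      refine Finset.sum_lt_sum (fun s _ => Nat.pow_le_pow_right two_pos (hncomp s))
        ⟨Finset.univ, Finset.mem_univ _, Nat.pow_lt_pow_right one_lt_two ?_⟩
      rwa [Finset.card_univ, Fintype.card_fin, Nat.sub_self]
    _ = Nat.card G.EState := card_EState.symm

end OGraph

section CycleGraph

open OGraph

/-- The walk that winds around the cycle graph. -/
def cycleWalk (n : ℕ) (hn : 0 < n) : (cycleGraph n hn).Walk where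
  vertex i := ⟨i % n, Nat.mod_lt i hn⟩
  edge i := ⟨i % n, Nat.mod_lt i hn⟩
  ends_edge i := by simp [cycleGraph]

variable {n : ℕ} {hn : 0 < n}

lemma cycleWalk_vertex_self : (cycleWalk n hn).vertex n = (cycleWalk n hn).vertex 0 :=
  Fin.ext ((Nat.mod_self n).trans (Nat.zero_mod n).symm)

lemma exists_cycleWalk_edge_eq (e : Fin (cycleGraph n hn).n) :
    ∃ i < n, (cycleWalk n hn).edge i = e :=
  ⟨e.1, e.2, Fin.ext (Nat.mod_eq_of_lt e.2)⟩

lemma exists_cycleWalk_vertex_eq (v : (cycleGraph n hn).V) :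
    ∃ i ≤ n, (cycleWalk n hn).vertex i = v :=
  ⟨v.1, v.2.le, Fin.ext (Nat.mod_eq_of_lt v.2)⟩

lemma diff_cycleGraph : (cycleGraph n hn).diff = (cycleWalk n hn).diff n := by
  rw [diff_eq_sum_edgeMul, Walk.diff, Finset.sum_range]
  exact Finset.sum_congr rfl fun e _ => congrArg edgeMul (Fin.ext (Nat.mod_eq_of_lt e.2).symm)

lemma cycleRealize_cycleWalk_bijective :
    Function.Bijective (Walk.cycleRealize n (cycleWalk n hn)) := by
  have hsurj := Walk.cycleRealize_surjective cycleWalk_vertex_self exists_cycleWalk_edge_eq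
    (exists_cycleWalk_vertex_eq (hn := hn))
  refine ⟨injective_of_surjective_of_finrank_le hsurj ?_, hsurj⟩
  have : Nonempty (cycleGraph n hn).V := ⟨⟨0, hn⟩⟩
  have := Fintype.ofFinite (cycleGraph n hn).EState
  rw [finrank_cycleChain, Module.finrank_finsupp_self, ← Nat.card_eq_fintype_card]
  exact three_pow_lt_card_EState (G := cycleGraph n hn) (Fintype.card_fin n).ge

/-- The deformation retraction of the chains of the cycle graph onto the small complex. -/
noncomputable def cycleGraphRetract (m : ℕ) :
    BigradedRetract weight (cycleGraph (m + 1) m.succ_pos).diff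
      (fun α β => smallWeight α β m) ((smallDiff m).restrictScalars ℤ) :=
  (cycleRetract m).congr (.ofBijective _ cycleRealize_cycleWalk_bijective)
    (fun c => by
      rw [diff_cycleGraph]
      exact Walk.diff_cycleRealize cycleWalk_vertex_self c)
    fun α β => Walk.weight_cycleRealize α β _

end CycleGraph

section SmallComplex

open scoped DualNumber

open TrivSqZeroExt OGraph

variable {m k : ℕ} {i j : ℤ} {s t : Fin m} {b : SmallChain m}

/-- The part of bidegree `(i, j)` of the small complex. -/
abbrev smallBidegree (m : ℕ) (i j : ℤ) : Submodule ℤ (SmallChain m) :=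
  bidegree (fun α β => smallWeight α β m) i j

lemma mem_smallBidegree : b ∈ smallBidegree m i j ↔ ∀ t : Fin m,
    ((b t).fst ≠ 0 → (t : ℤ) = i ∧ (m - t : ℤ) = j) ∧
      ((b t).snd ≠ 0 → (t : ℤ) = i ∧ (m - t + 1 : ℤ) = j) := by
  have hfst (α β : ℤ) (t : Fin m) :
      (smallWeight α β m b t).fst = (α * t + β * (m - t)) * (b t).fst := by
    simp [smallWeight_apply, euler]
  have hsnd (α β : ℤ) (t : Fin m) :
      (smallWeight α β m b t).snd = (α * t + β * (m - t + 1)) * (b t).snd := by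
    simp only [smallWeight_apply, euler, LinearMap.comp_apply, sndHom_apply, inrHom_apply, snd_add,
      snd_smul, snd_inr, smul_eq_mul]
    ring
  have hweight : b ∈ smallBidegree m i j ↔ ∀ α β, ∀ t : Fin m,
      (α * t + β * (m - t) = α * i + β * j ∨ (b t).fst = 0) ∧
        (α * t + β * (m - t + 1) = α * i + β * j ∨ (b t).snd = 0) := by
    simp only [mem_bidegree, funext_iff, TrivSqZeroExt.ext_iff, hfst, hsnd, Pi.smul_apply, fst_smul,
      snd_smul, smul_eq_mul, mul_eq_mul_right_iff]
  rw [hweight]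
  constructor
  · refine fun h t => ⟨fun ht => ?_, fun ht => ?_⟩
    · simpa [ht] using And.intro (h 1 0 t).1 (h 0 1 t).1
    · simpa [ht] using And.intro (h 1 0 t).2 (h 0 1 t).2
  · intro h α β t
    refine ⟨or_iff_not_imp_right.2 fun ht => ?_, or_iff_not_imp_right.2 fun ht => ?_⟩
    · rw [((h t).1 ht).1, ← ((h t).1 ht).2, ((h t).1 ht).1]
    · rw [((h t).2 ht).1, ← ((h t).2 ht).2, ((h t).2 ht).1]

lemma smallBidegree_eq_bot (h : ∀ t : Fin m, (t : ℤ) = i → (m - t : ℤ) ≠ j ∧ (m - t + 1 : ℤ) ≠ j) :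
    smallBidegree m i j = ⊥ := by
  refine (Submodule.eq_bot_iff _).2 fun b hb => funext fun t => ?_
  obtain ⟨hfst, hsnd⟩ := mem_smallBidegree.1 hb t
  ext
  · exact by_contra fun ht => (h t (hfst ht).1).1 (hfst ht).2
  · exact by_contra fun ht => (h t (hsnd ht).1).2 (hsnd ht).2

lemma mem_smallBidegree_iff_single : b ∈ smallBidegree m t j ↔ ∃ a : ℤ[ε],
    (a.fst ≠ 0 → (m - t : ℤ) = j) ∧ (a.snd ≠ 0 → (m - t + 1 : ℤ) = j) ∧ Pi.single t a = b := by
  rw [mem_smallBidegree]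
  constructor
  · intro h
    refine ⟨b t, fun ht => ((h t).1 ht).2, fun ht => ((h t).2 ht).2, funext fun u => ?_⟩
    by_cases hut : u = t
    · rw [hut, Pi.single_eq_same]
    · have hne : (u : ℤ) ≠ t := by exact_mod_cast Fin.val_ne_of_ne hut
      rw [Pi.single_eq_of_ne hut]
      ext
      · exact by_contra fun hu => hne ((h u).1 (Ne.symm hu)).1
      · exact by_contra fun hu => hne ((h u).2 (Ne.symm hu)).1
  · rintro ⟨a, hfst, hsnd, rfl⟩ u
    by_cases hut : u = t
    · rw [hut, Pi.single_eq_same]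
      exact ⟨fun ha => ⟨rfl, hfst ha⟩, fun ha => ⟨rfl, hsnd ha⟩⟩
    · simp [Pi.single_eq_of_ne hut]

lemma mem_smallBidegree_one (hk : t + k = m) :
    b ∈ smallBidegree m t k ↔ ∃ a, Pi.single t (inl a) = b := by
  rw [mem_smallBidegree_iff_single]
  constructor
  · rintro ⟨a, -, hsnd, rfl⟩
    have ha : a.snd = 0 := by_contra fun ha => by have := hsnd ha; omega
    exact ⟨a.fst, congrArg _ (TrivSqZeroExt.ext rfl ha.symm)⟩
  · rintro ⟨a, rfl⟩
    exact ⟨inl a, fun _ => by omega, fun ha => (ha (snd_inl ℤ a)).elim, rfl⟩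

lemma mem_smallBidegree_x (hk : t + k = m) :
    b ∈ smallBidegree m t (k + 1) ↔ ∃ a, Pi.single t (inr a) = b := by
  rw [mem_smallBidegree_iff_single]
  constructor
  · rintro ⟨a, hfst, -, rfl⟩
    have ha : a.fst = 0 := by_contra fun ha => by have := hfst ha; omega
    exact ⟨a.snd, congrArg _ (TrivSqZeroExt.ext ha.symm rfl)⟩
  · rintro ⟨a, rfl⟩
    exact ⟨inr a, fun ha => (ha (fst_inr ℤ a)).elim, fun _ => by omega, rfl⟩

lemma smallDiff_single (hst : (s : ℕ) + 1 = t) (a : ℤ[ε]) :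
    smallDiff m (Pi.single s a) =
      Pi.single t ((((-1) ^ (s : ℕ) + (-1) ^ m) * ε : ℤ[ε]) • a) := by
  cases m with
  | zero => exact s.elim0
  | succ m =>
    obtain ⟨t, rfl⟩ := Fin.exists_succ_eq.2 (show t ≠ 0 by rintro rfl; simp at hst)
    obtain rfl : s = t.castSucc := Fin.ext (by simpa using hst)
    ext u : 1
    cases u using Fin.cases with
    | zero => rw [smallDiff_zero, Pi.single_eq_of_ne (Fin.succ_ne_zero t).symm]
    | succ u =>
      rw [smallDiff_succ]
      by_cases hut : u = t
      · rw [hut, Pi.single_eq_same, Pi.single_eq_same, Fin.val_castSucc]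
      · rw [Pi.single_eq_of_ne (by simpa using hut), Pi.single_eq_of_ne (by simpa using hut),
          smul_zero]

lemma smallDiff_single_last (ht : (t : ℕ) + 1 = m) (a : ℤ[ε]) :
    smallDiff m (Pi.single t a) = 0 := by
  cases m with
  | zero => exact t.elim0
  | succ m =>
    ext u : 1
    cases u using Fin.cases with
    | zero => exact smallDiff_zero _
    | succ u =>
      have hut : u.castSucc ≠ t := Fin.ne_of_val_ne (by simp only [Fin.val_castSucc]; omega)
      rw [smallDiff_succ, Pi.single_eq_of_ne hut, smul_zero, Pi.zero_apply]

lemma smallDiff_single_inl (hst : (s : ℕ) + 1 = t) (a : ℤ) :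
    smallDiff m (Pi.single s (inl a)) =
      Pi.single t (inr (((-1) ^ (s : ℕ) + (-1) ^ m) * a)) := by
  have hcoeff : ((-1) ^ (s : ℕ) + (-1) ^ m : ℤ[ε]) = inl ((-1) ^ (s : ℕ) + (-1) ^ m) := by
    rw [inl_add, ← inl_pow, ← inl_pow, inl_neg, inl_one]
  rw [smallDiff_single hst, hcoeff]
  congr 1
  ext
  · simp
  · simp [add_mul]

lemma smallDiff_single_inr (a : ℤ) : smallDiff m (Pi.single s (inr a)) = 0 := by
  obtain hs | hs : (s : ℕ) + 1 = m ∨ (s : ℕ) + 1 < m := by omega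
  · exact smallDiff_single_last hs _
  · have heps : ε * (inr a : ℤ[ε]) = 0 := by ext <;> simp
    rw [smallDiff_single (t := ⟨s + 1, hs⟩) rfl, smul_eq_mul, mul_assoc, heps, mul_zero,
      Pi.single_zero]

lemma smallDiff_single_inl_of_odd (hk : s + k = m) (hodd : Odd k) (a : ℤ) :
    smallDiff m (Pi.single s (inl a)) = 0 := by
  obtain hs | hs : (s : ℕ) + 1 = m ∨ (s : ℕ) + 1 < m := by omega
  · exact smallDiff_single_last hs _
  · have hsign : ((-1) ^ m : ℤ) = -(-1) ^ (s : ℕ) := by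
      conv_lhs => rw [← hk, pow_add, hodd.neg_one_pow, mul_neg_one]
    rw [smallDiff_single_inl (t := ⟨s + 1, hs⟩) rfl, hsign, add_neg_cancel, zero_mul, inr_zero,
      Pi.single_zero]

lemma smallDiff_single_inl_of_even (hk : s + k = m) (heven : Even k) (hst : (s : ℕ) + 1 = t)
    (a : ℤ) : smallDiff m (Pi.single s (inl a)) = Pi.single t (inr (2 * ((-1) ^ (s : ℕ) * a))) := by
  have hsign : ((-1) ^ m : ℤ) = (-1) ^ (s : ℕ) := by
    conv_lhs => rw [← hk, pow_add, heven.neg_one_pow, mul_one]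
  rw [smallDiff_single_inl hst, hsign, ← two_mul, mul_assoc]

lemma nonempty_Hmod_equiv_int {i j : ℕ} (g : ℤ →ₗ[ℤ] SmallChain m) (f : SmallChain m →ₗ[ℤ] ℤ)
    (hfg : ∀ a, f (g a) = a) (hmem : ∀ {b}, b ∈ smallBidegree m i j ↔ ∃ a, g a = b)
    (hcocycle : ∀ a, smallDiff m (g a) = 0)
    (hboundary : ∀ b ∈ smallBidegree m (i - 1) j, smallDiff m b = 0) :
    Nonempty ((cycleGraph (m + 1) m.succ_pos).Hmod i j ≃+ ℤ) := by
  refine nonempty_Hmod_equiv (cycleGraphRetract m) f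
    (fun a => ⟨g a, hmem.2 ⟨a, rfl⟩, hcocycle a, hfg a⟩) fun b hb _ => ?_
  obtain ⟨a, rfl⟩ := hmem.1 hb
  constructor
  · intro ha
    rw [hfg] at ha
    exact ⟨0, zero_mem _, by rw [ha, map_zero, map_zero]⟩
  · rintro ⟨c, hc, hdc⟩
    rw [← hdc]
    exact (congrArg f (hboundary c hc)).trans (map_zero f)

lemma subsingleton_Hmod_of_forall_eq_zero {i j : ℕ}
    (h : ∀ b ∈ smallBidegree m i j, smallDiff m b = 0 → b = 0) :
    Subsingleton ((cycleGraph (m + 1) m.succ_pos).Hmod i j) := by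
  obtain ⟨e⟩ := nonempty_Hmod_equiv (B := PUnit.{1}) (cycleGraphRetract m) (i := i) (j := j) 0
    (fun _ => ⟨0, zero_mem _, map_zero _, rfl⟩)
    fun b hb hdb => iff_of_true rfl ⟨0, zero_mem _, (map_zero _).trans (h b hb hdb).symm⟩
  exact e.injective.subsingleton

end SmallComplex

section Cohomology

open scoped DualNumber

open TrivSqZeroExt OGraph

variable {m i j k : ℕ}

lemma nonempty_Hmod_equiv_int_of_odd (hk : i + k = m) (hodd : Odd k) :
    Nonempty ((cycleGraph (m + 1) m.succ_pos).Hmod i k ≃+ ℤ) := by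
  have hpos := hodd.pos
  obtain ⟨t, rfl⟩ : ∃ t : Fin m, (t : ℕ) = i := ⟨⟨i, by omega⟩, rfl⟩
  refine nonempty_Hmod_equiv_int
    (.single ℤ (fun _ => ℤ[ε]) t ∘ₗ (inlAlgHom ℤ ℤ ℤ).toLinearMap)
    ((fstHom ℤ ℤ ℤ).toLinearMap ∘ₗ .proj t) (fun a => by simp) (mem_smallBidegree_one hk)
    (smallDiff_single_inl_of_odd hk hodd) fun b hb => ?_
  rw [smallBidegree_eq_bot fun s hs => by omega, Submodule.mem_bot] at hb
  rw [hb, map_zero]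

lemma nonempty_Hmod_equiv_int_of_even (hk : i + k = m) (hpos : 0 < k) (h : i = 0 ∨ Even k) :
    Nonempty ((cycleGraph (m + 1) m.succ_pos).Hmod i (k + 1) ≃+ ℤ) := by
  obtain ⟨t, rfl⟩ : ∃ t : Fin m, (t : ℕ) = i := ⟨⟨i, by omega⟩, rfl⟩
  refine nonempty_Hmod_equiv_int (.single ℤ (fun _ => ℤ[ε]) t ∘ₗ inrHom ℤ ℤ)
    (sndHom ℤ ℤ ∘ₗ .proj t) (fun a => by simp) (mem_smallBidegree_x hk) smallDiff_single_inr
    fun b hb => ?_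
  by_cases ht : (t : ℕ) = 0
  · rw [smallBidegree_eq_bot fun s hs => by omega, Submodule.mem_bot] at hb
    rw [hb, map_zero]
  · obtain ⟨s, hst⟩ : ∃ s : Fin m, (s : ℕ) + 1 = t := ⟨⟨t - 1, by omega⟩, by dsimp only; omega⟩
    rw [show (t - 1 : ℤ) = s by omega, mem_smallBidegree_one (by omega)] at hb
    obtain ⟨a, rfl⟩ := hb
    exact smallDiff_single_inl_of_odd (by omega) (h.resolve_left ht).add_one a

lemma nonempty_Hmod_equiv_zmod_two (hk : i + k = m) (hi : 0 < i) (hodd : Odd k) :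
    Nonempty ((cycleGraph (m + 1) m.succ_pos).Hmod i (k + 1) ≃+ ZMod 2) := by
  have hpos := hodd.pos
  obtain ⟨t, rfl⟩ : ∃ t : Fin m, (t : ℕ) = i := ⟨⟨i, by omega⟩, rfl⟩
  obtain ⟨s, hst⟩ : ∃ s : Fin m, (s : ℕ) + 1 = t := ⟨⟨t - 1, by omega⟩, by dsimp only; omega⟩
  have hcast : ((t : ℕ) : ℤ) - 1 = s := by omega
  have hsk : s + (k + 1) = m := by omega
  have hone {b : SmallChain m} := mem_smallBidegree_one (b := b) hsk
  have hdiff := smallDiff_single_inl_of_even hsk hodd.add_one hst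
  let f : SmallChain m →ₗ[ℤ] ZMod 2 :=
    (Int.castAddHom (ZMod 2)).toIntLinearMap ∘ₗ sndHom ℤ ℤ ∘ₗ .proj t
  have hf (a : ℤ) : f (Pi.single t (inr a)) = a := by simp [f]
  refine nonempty_Hmod_equiv (cycleGraphRetract m) f ?_ ?_
  · intro c
    obtain ⟨a, rfl⟩ := ZMod.intCast_surjective c
    exact ⟨_, (mem_smallBidegree_x hk).2 ⟨a, rfl⟩, smallDiff_single_inr a, hf a⟩
  · intro b hb _
    obtain ⟨a, rfl⟩ := (mem_smallBidegree_x hk).1 hb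
    rw [hf, ZMod.intCast_zmod_eq_zero_iff_dvd, hcast]
    constructor
    · rintro ⟨c, rfl⟩
      refine ⟨_, hone.2 ⟨(-1) ^ (s : ℕ) * c, rfl⟩, (hdiff _).trans ?_⟩
      rw [← mul_assoc ((-1) ^ (s : ℕ)), ← mul_pow, neg_one_mul, neg_neg, one_pow, one_mul]
      rfl
    · rintro ⟨b, hb, hdb⟩
      obtain ⟨c, rfl⟩ := hone.1 hb
      exact ⟨_, inr_injective (Pi.single_injective t (hdb.symm.trans (hdiff c)))⟩

lemma subsingleton_Hmod_of_ne (hk : i + k = m) (hj : j ≠ k) (hj' : j ≠ k + 1) :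
    Subsingleton ((cycleGraph (m + 1) m.succ_pos).Hmod i j) :=
  subsingleton_Hmod_of_forall_eq_zero fun _ hb _ => by
    rwa [smallBidegree_eq_bot fun s hs => by omega] at hb

lemma subsingleton_Hmod_of_le (hi : m ≤ i) (j : ℕ) :
    Subsingleton ((cycleGraph (m + 1) m.succ_pos).Hmod i j) :=
  subsingleton_Hmod_of_forall_eq_zero fun _ hb _ => by
    rwa [smallBidegree_eq_bot fun s hs => by omega] at hb

lemma subsingleton_Hmod_of_even (hk : i + k = m) (heven : Even k) :
    Subsingleton ((cycleGraph (m + 1) m.succ_pos).Hmod i k) := by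
  obtain hi | hi := le_or_gt m i
  · exact subsingleton_Hmod_of_le hi k
  obtain ⟨t, rfl⟩ : ∃ t : Fin m, (t : ℕ) = i := ⟨⟨i, hi⟩, rfl⟩
  have ht : (t : ℕ) + 1 < m := by
    obtain ⟨l, rfl⟩ := heven
    omega
  refine subsingleton_Hmod_of_forall_eq_zero fun b hb hdb => ?_
  obtain ⟨a, rfl⟩ := (mem_smallBidegree_one hk).1 hb
  rw [smallDiff_single_inl_of_even (t := ⟨t + 1, ht⟩) hk heven rfl] at hdb
  have hcoeff : 2 * ((-1) ^ (t : ℕ) * a) = 0 :=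
    inr_injective ((Pi.single_eq_zero_iff.1 hdb).trans (inr_zero ℤ).symm)
  obtain rfl : a = 0 := by simpa using hcoeff
  rw [inl_zero, Pi.single_zero]

lemma subsingleton_Hmod_of_even_of_ne (hk : i + k = m) (heven : Even k) (hj : j ≠ k + 1) :
    Subsingleton ((cycleGraph (m + 1) m.succ_pos).Hmod i j) := by
  obtain rfl | hjk := eq_or_ne j k
  · exact subsingleton_Hmod_of_even hk heven
  · exact subsingleton_Hmod_of_ne hk hjk hj

lemma exists_Hmod_two_torsion (hm : 2 ≤ m) :
    ∃ (i j : ℕ) (x : (cycleGraph (m + 1) m.succ_pos).Hmod i j), x ≠ 0 ∧ x + x = 0 := by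
  obtain ⟨e⟩ := nonempty_Hmod_equiv_zmod_two (Nat.sub_add_cancel (by omega : 1 ≤ m)) (by omega)
    odd_one
  have htwo : (1 + 1 : ZMod 2) = 0 := rfl
  exact ⟨_, _, e.symm 1, by simp, by rw [← map_add, htwo, map_zero]⟩

end Cohomology

/-- the graph cohomology of the cycle graph `P_n`, `n ≥ 2`:
`H^0(P_n) ≅ ℤ{n} ⊕ ℤ{n−1}` if `n` is even and `ℤ{n}` if `n` is odd; for `i > 0`,
`H^i(P_n) ≅ ℤ₂{n−i} ⊕ ℤ{n−i−1}` if `n − i ≥ 2` is even, `ℤ{n−i}` if `n − i ≥ 2` is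
odd, and `0` if `n − i ≤ 1`. In particular `H^*(P_n)` contains 2-torsion for all
`n ≥ 3`. -/
theorem cohomology_cycle_graph (n : ℕ) (hn : 2 ≤ n) :
    letI G := cycleGraph n (by omega)
    (Even n →
      Nonempty (G.Hmod 0 n ≃+ ℤ) ∧ Nonempty (G.Hmod 0 (n - 1) ≃+ ℤ) ∧
        ∀ j : ℕ, j ≠ n → j ≠ n - 1 → Subsingleton (G.Hmod 0 j)) ∧
    (¬Even n →
      Nonempty (G.Hmod 0 n ≃+ ℤ) ∧ ∀ j : ℕ, j ≠ n → Subsingleton (G.Hmod 0 j)) ∧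
    (∀ i : ℕ, 0 < i → 2 ≤ n - i → Even (n - i) →
      Nonempty (G.Hmod i (n - i) ≃+ ZMod 2) ∧
        Nonempty (G.Hmod i (n - i - 1) ≃+ ℤ) ∧
        ∀ j : ℕ, j ≠ n - i → j ≠ n - i - 1 → Subsingleton (G.Hmod i j)) ∧
    (∀ i : ℕ, 0 < i → 2 ≤ n - i → ¬Even (n - i) →
      Nonempty (G.Hmod i (n - i) ≃+ ℤ) ∧
        ∀ j : ℕ, j ≠ n - i → Subsingleton (G.Hmod i j)) ∧
    (∀ i : ℕ, 0 < i → n - i ≤ 1 → ∀ j : ℕ, Subsingleton (G.Hmod i j)) ∧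
    (3 ≤ n → ∃ (i j : ℕ) (x : G.Hmod i j), x ≠ 0 ∧ x + x = 0) := by
  obtain ⟨m, rfl⟩ : ∃ m, n = m + 1 := ⟨n - 1, by omega⟩
  have hm : 0 + m = m := zero_add m
  have hH₀ := nonempty_Hmod_equiv_int_of_even hm (by omega) (.inl rfl)
  refine ⟨fun heven => ⟨hH₀, nonempty_Hmod_equiv_int_of_odd hm (by grind),
      fun j hj hj' => subsingleton_Hmod_of_ne hm hj' hj⟩,
    fun hodd => ⟨hH₀, fun j hj => subsingleton_Hmod_of_even_of_ne hm (by grind) hj⟩,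
    fun i hi h2 heven => ?_, fun i _ h2 hodd => ?_,
    fun i _ h1 j => subsingleton_Hmod_of_le (by omega) j,
    fun h3 => exists_Hmod_two_torsion (by omega)⟩
  all_goals
    obtain ⟨k, hk⟩ := Nat.exists_eq_add_of_le (show i ≤ m by omega)
    rw [show m + 1 - i = k + 1 by omega] at *
  · have hodd : Odd k := by grind
    exact ⟨nonempty_Hmod_equiv_zmod_two hk.symm hi hodd,
      nonempty_Hmod_equiv_int_of_odd hk.symm hodd,
      fun j hj hj' => subsingleton_Hmod_of_ne hk.symm hj' hj⟩
  · have heven : Even k := by grind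
    exact ⟨nonempty_Hmod_equiv_int_of_even hk.symm (by omega) (.inr heven),
      fun j hj => subsingleton_Hmod_of_even_of_ne hk.symm heven hj⟩
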